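/- Let N ≥ 2 and a ∈ L^∞ S^m_1(n,N) with m < 0. Suppose the phase functions φ_j ∈ C^∞(ℝⁿ×ℝⁿ), j = 1,…,N, satisfy the SND condition and |∂_x^α ∂_ξ^β φ_j(x,ξ)| ≤ C_{j,α,β} for all x, ξ and all multi-indices α, β with |α|+|β| ≥ 2 (no homogeneity is assumed). Then the multilinear FIO T_a(f₁,…,f_N)(x) = ∫_{ℝ^{Nn}} a(x,ξ₁,…,ξ_N) e^{iΣ_j φ_j(x,ξ_j)} ∏_j f̂_j(ξ_j) dξ₁⋯dξ_N is bounded from L²(ℝⁿ) × ⋯ × L²(ℝⁿ) to L^{2/N}(ℝⁿ): ‖T_a(f₁,…,f_N)‖_{L^{2/N}} ≤ C ∏_j ‖f_j‖_{L²} for all Schwartz f₁,…,f_N. -/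

import Mathlib

open MeasureTheory Real Complex
open scoped ENNReal NNReal RealInnerProductSpace SchwartzMap Classical

noncomputable section

/-- `ℝⁿ` as a Euclidean space. -/
abbrev En (n : ℕ) : Type := EuclideanSpace ℝ (Fin n)

/-- Partial derivative in the `i`-th coordinate direction. -/
def pd {n : ℕ} {F : Type} [NormedAddCommGroup F] [NormedSpace ℝ F]
    (i : Fin n) (f : En n → F) : En n → F :=
  fun x => fderiv ℝ f x (EuclideanSpace.single i 1)

/-- Multi-index partial derivative `∂^α`. -/
def mderiv {n : ℕ} {F : Type} [NormedAddCommGroup F] [NormedSpace ℝ F]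
    (α : Fin n → ℕ) (f : En n → F) : En n → F :=
  (List.finRange n).foldr (fun i g => (pd i)^[α i] g) f

/-- The order `|α|` of a multi-index. -/
def mdeg {n : ℕ} (α : Fin n → ℕ) : ℕ := ∑ i, α i

/-- The finite set of multi-indices `α` with every entry `≤ k` and `|α| ≤ k`;
this enumerates all multi-indices of order at most `k`. -/
def multiIdx (n k : ℕ) : Finset (Fin n → ℕ) :=
  (Fintype.piFinset fun _ : Fin n => Finset.range (k + 1)).filter fun α => mdeg α ≤ k

/-- Japanese bracket `⟨ξ⟩^t = (1+|ξ|²)^{t/2}`. -/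
def jb {n : ℕ} (ξ : En n) (t : ℝ) : ℝ := (1 + ‖ξ‖ ^ 2) ^ (t / 2)

/-- The rough amplitude class `L^p S^m_ρ`. -/
def LpSm {n : ℕ} (p : ℝ≥0∞) (m ρ : ℝ) (a : En n → En n → ℂ) : Prop :=
  (∀ x, ContDiff ℝ (⊤ : ℕ∞) (a x)) ∧
  (∀ (α : Fin n → ℕ) (ξ : En n), AEStronglyMeasurable (fun x => mderiv α (a x) ξ) volume) ∧
  ∀ α : Fin n → ℕ, ∃ C : ℝ, ∀ ξ : En n,
    eLpNorm (fun x => mderiv α (a x) ξ) p volume ≤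
      ENNReal.ofReal (C * jb ξ (m - ρ * (mdeg α : ℝ)))

/-- The seminorms `|a|_{p,m,s}` of an amplitude in `L^p S^m_ρ`. -/
def aSemi {n : ℕ} (p : ℝ≥0∞) (m ρ : ℝ) (s : ℕ) (a : En n → En n → ℂ) : ℝ≥0∞ :=
  ∑ α ∈ multiIdx n s, ⨆ ξ : En n,
    ENNReal.ofReal (jb ξ (ρ * (mdeg α : ℝ) - m)) *
      eLpNorm (fun x => mderiv α (a x) ξ) p volume

/-- The mixed derivative `∂_ξ^α ∂_x^β φ(x,ξ)`. -/
def mixedD {n : ℕ} (α β : Fin n → ℕ) (φ : En n → En n → ℝ) (x ξ : En n) : ℝ :=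
  mderiv α (fun ζ => mderiv β (fun y => φ y ζ) x) ξ

/-- The phase function class `Φ^k`. -/
def PhiClass {n : ℕ} (k : ℕ) (φ : En n → En n → ℝ) : Prop :=
  ContDiffOn ℝ (⊤ : ℕ∞) (fun q : En n × En n => φ q.1 q.2) {q | q.2 ≠ 0} ∧
  (∀ (x ξ : En n) (t : ℝ), 0 < t → φ x (t • ξ) = t * φ x ξ) ∧
  ∀ α β : Fin n → ℕ, k ≤ mdeg α + mdeg β →
    ∃ C : ℝ, ∀ (x ξ : En n), ξ ≠ 0 →
      ‖ξ‖ ^ ((mdeg α : ℝ) - 1) * |mixedD α β φ x ξ| ≤ C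

/-- The mixed Hessian matrix `[∂²φ/∂x_j∂ξ_k]`. -/
def mixHess {n : ℕ} (φ : En n → En n → ℝ) (x ξ : En n) : Matrix (Fin n) (Fin n) ℝ :=
  Matrix.of fun j k => pd j (fun y => pd k (φ y) ξ) x

/-- The strong non-degeneracy (SND) condition. -/
def SNDcond {n : ℕ} (φ : En n → En n → ℝ) : Prop :=
  ∃ c : ℝ, 0 < c ∧ ∀ (x ξ : En n), ξ ≠ 0 → c ≤ |(mixHess φ x ξ).det|

/-- The Fourier transform `f̂(ξ) = ∫ e^{-i⟨y,ξ⟩} f(y) dy`. -/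
def ft {n : ℕ} (f : En n → ℂ) (ξ : En n) : ℂ :=
  ∫ y : En n, Complex.exp (-(Complex.I * Complex.ofReal ⟪y, ξ⟫)) * f y

/-- The linear Fourier integral operator
`T_a f(x) = (2π)^{-n} ∫ e^{iφ(x,ξ)} a(x,ξ) f̂(ξ) dξ`. -/
def fio {n : ℕ} (a : En n → En n → ℂ) (φ : En n → En n → ℝ) (f : En n → ℂ)
    (x : En n) : ℂ :=
  (((2 * Real.pi) ^ n)⁻¹ : ℝ) •
    ∫ ξ : En n, Complex.exp (Complex.I * Complex.ofReal (φ x ξ)) * a x ξ * ft f ξ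

/-- The conjugate exponent `p′` of `p ∈ [1,∞]`. -/
def pconj (p : ℝ≥0∞) : ℝ≥0∞ := (1 - p⁻¹)⁻¹

/-- The order `𝔪(ρ,p,q)` from Definition 4.6. -/
def frakm (n : ℕ) (ρ : ℝ) (p q : ℝ≥0∞) : ℝ :=
  if p < 2 ∨ (2 ≤ p ∧ q < pconj p) then
    (n : ℝ) * (ρ - 1) * (min p q)⁻¹.toReal -
      (((n : ℝ) - 1) / 2) * (p⁻¹.toReal + (min p q)⁻¹.toReal)
  else if 2 ≤ q then
    (n : ℝ) * (ρ - 1) / 2 - ((n : ℝ) - 1) * (1 / 2 - q⁻¹.toReal)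
  else
    (n : ℝ) * (ρ - 1) * q⁻¹.toReal -
      (((n : ℝ) - 1) / (1 - 2 * p⁻¹.toReal)) * (q⁻¹.toReal - 1 / 2)

/-- The order `ℳ(ρ,p,q)` from Definition 4.6. -/
def scrM (n : ℕ) (ρ : ℝ) (p q : ℝ≥0∞) : ℝ :=
  (n : ℝ) * (ρ - 1) * q⁻¹.toReal -
    (((n : ℝ) - 1) / (1 + p⁻¹.toReal)) * (q⁻¹.toReal - 1 / 2)

/-- The distribution function `λ_f(s) = |{x : |f(x)| > s}|`. -/
def distFn {n : ℕ} (f : En n → ℂ) (s : ℝ) : ℝ≥0∞ := volume {x : En n | s < ‖f x‖}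

/-- The decreasing rearrangement `f*`. -/
def rearr {n : ℕ} (f : En n → ℂ) (t : ℝ) : ℝ :=
  sInf {s : ℝ | 0 ≤ s ∧ distFn f s ≤ ENNReal.ofReal t}

/-- The Lorentz space quasinorm
`‖f‖_{L^{r,q}} = (∫_0^∞ (t^{1/r} f*(t))^q dt/t)^{1/q}`. -/
def lorentzNorm {n : ℕ} (r q : ℝ≥0∞) (f : En n → ℂ) : ℝ≥0∞ :=
  (∫⁻ t in Set.Ioi (0 : ℝ),
      ENNReal.ofReal ((t ^ r⁻¹.toReal * rearr f t) ^ q.toReal / t)) ^ q⁻¹.toReal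

/-- Mixed frequency derivatives `∂_ξ^{α₁} ∂_η^{α₂} a(x,ξ,η)` of a bilinear amplitude. -/
def d2 {n : ℕ} (α₁ α₂ : Fin n → ℕ) (a : En n → En n → En n → ℂ)
    (x ξ η : En n) : ℂ :=
  mderiv α₁ (fun ζ => mderiv α₂ (fun θ => a x ζ θ) η) ξ

/-- Mixed derivatives `∂_x^β ∂_ξ^{α₁} ∂_η^{α₂} a(x,ξ,η)` of a bilinear amplitude. -/
def d3 {n : ℕ} (β α₁ α₂ : Fin n → ℕ) (a : En n → En n → En n → ℂ)
    (x ξ η : En n) : ℂ :=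
  mderiv β (fun y => d2 α₁ α₂ a y ξ η) x

/-- The bilinear product-type rough amplitude class `L^p_Π S^{(m₁,m₂)}_{(ρ₁,ρ₂)}(n,2)`. -/
def LpPiSm2 {n : ℕ} (p : ℝ≥0∞) (m₁ m₂ ρ₁ ρ₂ : ℝ) (a : En n → En n → En n → ℂ) : Prop :=
  (∀ x, ContDiff ℝ (⊤ : ℕ∞) (fun q : En n × En n => a x q.1 q.2)) ∧
  (∀ (α₁ α₂ : Fin n → ℕ) (ξ η : En n),
    AEStronglyMeasurable (fun x => d2 α₁ α₂ a x ξ η) volume) ∧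
  ∀ α₁ α₂ : Fin n → ℕ, ∃ C : ℝ, ∀ ξ η : En n,
    eLpNorm (fun x => d2 α₁ α₂ a x ξ η) p volume ≤
      ENNReal.ofReal (C * jb ξ (m₁ - ρ₁ * (mdeg α₁ : ℝ)) * jb η (m₂ - ρ₂ * (mdeg α₂ : ℝ)))

/-- The bilinear rough amplitude class `L^p S^m_ρ(n,2)`. -/
def LpSm2 {n : ℕ} (p : ℝ≥0∞) (m ρ : ℝ) (a : En n → En n → En n → ℂ) : Prop :=
  (∀ x, ContDiff ℝ (⊤ : ℕ∞) (fun q : En n × En n => a x q.1 q.2)) ∧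
  (∀ (α₁ α₂ : Fin n → ℕ) (ξ η : En n),
    AEStronglyMeasurable (fun x => d2 α₁ α₂ a x ξ η) volume) ∧
  ∀ α₁ α₂ : Fin n → ℕ, ∃ C : ℝ, ∀ ξ η : En n,
    eLpNorm (fun x => d2 α₁ α₂ a x ξ η) p volume ≤
      ENNReal.ofReal (C * (1 + ‖ξ‖ + ‖η‖) ^ (m - ρ * ((mdeg α₁ : ℝ) + (mdeg α₂ : ℝ))))

/-- The bilinear Hörmander class `S^m_{ρ,δ}(n,2)`. -/
def HormS2 {n : ℕ} (m ρ δ : ℝ) (a : En n → En n → En n → ℂ) : Prop :=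
  ContDiff ℝ (⊤ : ℕ∞) (fun q : En n × En n × En n => a q.1 q.2.1 q.2.2) ∧
  ∀ β α₁ α₂ : Fin n → ℕ, ∃ C : ℝ, ∀ x ξ η : En n,
    ‖d3 β α₁ α₂ a x ξ η‖ ≤
      C * (1 + ‖ξ‖ + ‖η‖) ^ (m - ρ * ((mdeg α₁ : ℝ) + (mdeg α₂ : ℝ)) + δ * (mdeg β : ℝ))

/-- The bilinear Fourier integral operator
`T_a(f,g)(x) = ∫∫ a(x,ξ,η) e^{iφ₁(x,ξ)+iφ₂(x,η)} f̂(ξ) ĝ(η) dξ dη`. -/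
def bfio {n : ℕ} (a : En n → En n → En n → ℂ) (φ₁ φ₂ : En n → En n → ℝ)
    (f g : En n → ℂ) (x : En n) : ℂ :=
  ∫ w : En n × En n,
    a x w.1 w.2 * Complex.exp (Complex.I * Complex.ofReal (φ₁ x w.1 + φ₂ x w.2)) *
      ft f w.1 * ft g w.2

/-- Partial derivative of a function of `N` frequency variables in the `i`-th coordinate
of the `j`-th variable. -/
def pdN {n N : ℕ} (j : Fin N) (i : Fin n) (g : (Fin N → En n) → ℂ) :
    (Fin N → En n) → ℂ :=
  fun ξ => fderiv ℝ g ξ (Pi.single j (EuclideanSpace.single i 1))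

/-- Multi-index derivative `∂_{ξ₁}^{A 1} ⋯ ∂_{ξ_N}^{A N}`. -/
def mderivN {n N : ℕ} (A : Fin N → Fin n → ℕ) (g : (Fin N → En n) → ℂ) :
    (Fin N → En n) → ℂ :=
  (List.finRange N).foldr
    (fun j h => (List.finRange n).foldr (fun i h' => (pdN j i)^[A j i] h') h) g

/-- The multilinear product-type rough amplitude class `L^p_Π S^{m⃗}_{ρ⃗}(n,N)`. -/
def LpPiSmN {n N : ℕ} (p : ℝ≥0∞) (m ρ : Fin N → ℝ)
    (a : En n → (Fin N → En n) → ℂ) : Prop :=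
  (∀ x, ContDiff ℝ (⊤ : ℕ∞) (a x)) ∧
  (∀ (A : Fin N → Fin n → ℕ) (ξ : Fin N → En n),
    AEStronglyMeasurable (fun x => mderivN A (a x) ξ) volume) ∧
  ∀ A : Fin N → Fin n → ℕ, ∃ C : ℝ, ∀ ξ : Fin N → En n,
    eLpNorm (fun x => mderivN A (a x) ξ) p volume ≤
      ENNReal.ofReal (C * ∏ j, jb (ξ j) (m j - ρ j * (mdeg (A j) : ℝ)))

/-- The multilinear rough amplitude class `L^p S^m_ρ(n,N)`. -/
def LpSmN {n N : ℕ} (p : ℝ≥0∞) (m ρ : ℝ) (a : En n → (Fin N → En n) → ℂ) : Prop :=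
  (∀ x, ContDiff ℝ (⊤ : ℕ∞) (a x)) ∧
  (∀ (A : Fin N → Fin n → ℕ) (ξ : Fin N → En n),
    AEStronglyMeasurable (fun x => mderivN A (a x) ξ) volume) ∧
  ∀ A : Fin N → Fin n → ℕ, ∃ C : ℝ, ∀ ξ : Fin N → En n,
    eLpNorm (fun x => mderivN A (a x) ξ) p volume ≤
      ENNReal.ofReal (C * (1 + ∑ j, ‖ξ j‖) ^ (m - ρ * ∑ j, (mdeg (A j) : ℝ)))

/-- The multilinear Fourier integral operator. -/
def mfio {n N : ℕ} (a : En n → (Fin N → En n) → ℂ) (φ : Fin N → En n → En n → ℝ)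
    (f : Fin N → En n → ℂ) (x : En n) : ℂ :=
  ∫ ξ : Fin N → En n,
    a x ξ * Complex.exp (Complex.I * Complex.ofReal (∑ j, φ j x (ξ j))) *
      ∏ j, ft (f j) (ξ j)

/-- The Sobolev (Bessel potential) norm `‖f‖_{H^{s,q}} = ‖ℱ^{-1}(⟨ξ⟩^s f̂)‖_{L^q}`. -/
def besselNorm {n : ℕ} (s : ℝ) (q : ℝ≥0∞) (f : En n → ℂ) : ℝ≥0∞ :=
  eLpNorm (fun x : En n =>
    (((2 * Real.pi) ^ n)⁻¹ : ℝ) •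
      ∫ ξ : En n, Complex.ofReal (jb ξ s) * ft f ξ *
        Complex.exp (Complex.I * Complex.ofReal ⟪x, ξ⟫)) q volume

/-!
By the fundamental theorem of calculus in every frequency coordinate, an amplitude of negative
order is a superposition of characteristic functions of orthants. These are products over the
slots, so `|T_a(f₁, …, f_N)|` is bounded pointwise by a product of `N` functions, the `j`-th being
a weighted average of the absolute values of the oscillatory integrals of `e^{iφ_j} f̂_j` over
orthants. Hölder's inequality then reduces the theorem to `N = 1` with no amplitude, uniformly
over orthants.

For that `L²` bound, the operator is paired with a second function and the resulting bilinear form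
is cut at unit scale into wave packets. On each packet the phase equals its linearization up to a
remainder with bounded derivatives, which is absorbed into the amplitude; the linearized packets
are summed by Plancherel and the change of variables `z ↦ ∇_jΦ(z)`. This map is globally injective
by Hadamard's theorem, because the mixed Hessian is bounded with determinant bounded away from
zero.
-/

section IteratedDirectionalDerivatives

variable {E E' F : Type*} [NormedAddCommGroup E] [NormedSpace ℝ E] [NormedAddCommGroup E']
  [NormedSpace ℝ E'] [NormedAddCommGroup F] [NormedSpace ℝ F]

/-- The iterated directional derivative `∂_{v₁} ⋯ ∂_{v_k} f` along a word `[v₁, …, v_k]` of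
directions. It mediates between the coordinate derivatives `mderivN`, `mixedD` and the
coordinate-free `iteratedFDeriv`. -/
def dirDeriv (L : List E) (f : E → F) : E → F :=
  L.foldr (fun v g x => fderiv ℝ g x v) f

@[simp]
theorem dirDeriv_nil (f : E → F) : dirDeriv [] f = f := rfl

theorem dirDeriv_cons (v : E) (L : List E) (f : E → F) :
    dirDeriv (v :: L) f = fun x => fderiv ℝ (dirDeriv L f) x v := rfl

theorem dirDeriv_append (L M : List E) (f : E → F) :
    dirDeriv (L ++ M) f = dirDeriv L (dirDeriv M f) := by
  simp only [dirDeriv, List.foldr_append]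

theorem dirDeriv_replicate (k : ℕ) (v : E) (f : E → F) :
    dirDeriv (List.replicate k v) f = (fun (g : E → F) x => fderiv ℝ g x v)^[k] f := by
  induction k with
  | zero => rfl
  | succ k ih => rw [List.replicate_succ, dirDeriv_cons, ih, Function.iterate_succ_apply']

theorem dirDeriv_flatMap {ι : Type*} (l : List ι) (M : ι → List E) (f : E → F) :
    dirDeriv (l.flatMap M) f = l.foldr (fun i g => dirDeriv (M i) g) f := by
  induction l with
  | nil => rfl
  | cons i l ih => rw [List.flatMap_cons, dirDeriv_append, ih, List.foldr_cons]

variable {f : E → F}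

theorem contDiff_fderiv_apply (hf : ContDiff ℝ (⊤ : ℕ∞) f) (v : E) :
    ContDiff ℝ (⊤ : ℕ∞) fun x => fderiv ℝ f x v :=
  (hf.fderiv_right (m := ((⊤ : ℕ∞) : WithTop ℕ∞)) le_rfl).clm_apply contDiff_const

theorem contDiff_dirDeriv (hf : ContDiff ℝ (⊤ : ℕ∞) f) (L : List E) :
    ContDiff ℝ (⊤ : ℕ∞) (dirDeriv L f) := by
  induction L with
  | nil => exact hf
  | cons v L ih => exact contDiff_fderiv_apply ih v

theorem isSymmSndFDerivAt_of_contDiff (hf : ContDiff ℝ (⊤ : ℕ∞) f) (x : E) :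
    IsSymmSndFDerivAt ℝ f x :=
  hf.contDiffAt.isSymmSndFDerivAt (by
    rw [minSmoothness_of_isRCLikeNormedField]
    exact WithTop.coe_le_coe.2 le_top)

theorem fderiv_fderiv_apply (hf : ContDiff ℝ (⊤ : ℕ∞) f) (v w x : E) :
    fderiv ℝ (fun y => fderiv ℝ f y w) x v = fderiv ℝ (fderiv ℝ f) x v w := by
  have hdiff : DifferentiableAt ℝ (fderiv ℝ f) x :=
    (hf.fderiv_right (m := 1) (by norm_cast)).differentiable (by simp) x
  simp [fderiv_clm_apply hdiff (differentiableAt_const _)]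

theorem fderiv_fderiv_apply_comm (hf : ContDiff ℝ (⊤ : ℕ∞) f) (v w x : E) :
    fderiv ℝ (fun y => fderiv ℝ f y w) x v = fderiv ℝ (fun y => fderiv ℝ f y v) x w := by
  rw [fderiv_fderiv_apply hf, fderiv_fderiv_apply hf]
  exact isSymmSndFDerivAt_of_contDiff hf x v w

theorem dirDeriv_perm (hf : ContDiff ℝ (⊤ : ℕ∞) f) {L M : List E} (h : L.Perm M) :
    dirDeriv L f = dirDeriv M f := by
  induction h with
  | nil => rfl
  | cons v _ ih => rw [dirDeriv_cons, dirDeriv_cons, ih]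
  | swap v w L => exact funext (fderiv_fderiv_apply_comm (contDiff_dirDeriv hf L) w v)
  | trans _ _ ih₁ ih₂ => rw [ih₁, ih₂]

theorem dirDeriv_comp_add_clm (hf : ContDiff ℝ (⊤ : ℕ∞) f) (c : E) (A : E' →L[ℝ] E)
    (L : List E') :
    dirDeriv L (fun z => f (c + A z)) = fun z => dirDeriv (L.map A) f (c + A z) := by
  induction L with
  | nil => rfl
  | cons v L ih =>
    funext z
    have houter := ((contDiff_dirDeriv hf (L.map A)).differentiable (by simp)
      (c + A z)).hasFDerivAt
    rw [dirDeriv_cons, ih]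
    exact congrArg (· v) (houter.comp z (A.hasFDerivAt.const_add c)).fderiv

theorem iteratedFDeriv_apply_eq_dirDeriv (hf : ContDiff ℝ (⊤ : ℕ∞) f) (k : ℕ) (v : Fin k → E)
    (x : E) : iteratedFDeriv ℝ k f x v = dirDeriv (List.ofFn v) f x := by
  induction k generalizing x with
  | zero => simp
  | succ k ih =>
    have hdiff : Differentiable ℝ (iteratedFDeriv ℝ k f) :=
      hf.differentiable_iteratedFDeriv (by exact_mod_cast WithTop.coe_lt_top k)
    have hih : dirDeriv (List.ofFn (Fin.tail v)) f =
        fun y => iteratedFDeriv ℝ k f y (Fin.tail v) := funext fun y => (ih _ y).symm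
    rw [List.ofFn_succ, dirDeriv_cons, iteratedFDeriv_succ_apply_left]
    change _ = fderiv ℝ (dirDeriv (List.ofFn (Fin.tail v)) f) x (v 0)
    rw [hih, fderiv_continuousMultilinear_apply_const_apply (hdiff x)]

end IteratedDirectionalDerivatives

section CoordinateWords

variable {n N : ℕ}

/-- The sorted word over `Fin n` in which the letter `i` occurs `α i` times. -/
def indexWord (α : Fin n → ℕ) : List (Fin n) :=
  (List.finRange n).flatMap fun i => List.replicate (α i) i

/-- The sorted word over `Fin N × Fin n` in which the letter `(j, i)` occurs `A j i` times. -/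
def coordWord (A : Fin N → Fin n → ℕ) : List (Fin N × Fin n) :=
  (List.finRange N).flatMap fun j => (indexWord (A j)).map (Prod.mk j)

/-- The coordinate vector of `(ℝⁿ)^N` in the `c.2`-th direction of the `c.1`-th slot. -/
def coordVec (c : Fin N × Fin n) : Fin N → En n :=
  Pi.single c.1 (EuclideanSpace.single c.2 1)

theorem sum_map_finRange (f : Fin n → ℕ) : ((List.finRange n).map f).sum = ∑ i, f i := by
  rw [← List.ofFn_eq_map, List.sum_ofFn]

theorem count_indexWord (α : Fin n → ℕ) (i : Fin n) : (indexWord α).count i = α i := by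
  rw [indexWord, List.count_flatMap, sum_map_finRange]
  simp [List.count_replicate]

theorem length_indexWord (α : Fin n → ℕ) : (indexWord α).length = mdeg α := by
  rw [indexWord, List.length_flatMap, sum_map_finRange, mdeg]
  simp only [List.length_replicate]

theorem length_coordWord (A : Fin N → Fin n → ℕ) :
    (coordWord A).length = ∑ j, mdeg (A j) := by
  rw [coordWord, List.length_flatMap, sum_map_finRange]
  simp only [List.length_map, length_indexWord]

theorem count_coordWord (A : Fin N → Fin n → ℕ) (c : Fin N × Fin n) :
    (coordWord A).count c = A c.1 c.2 := by
  have hcount : ∀ k, ((indexWord (A k)).map (Prod.mk k)).count c =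
      if k = c.1 then A c.1 c.2 else 0 := by
    intro k
    split_ifs with h
    · subst h
      rw [show c = Prod.mk c.1 c.2 from rfl,
        List.count_map_of_injective _ _ (Prod.mk_right_injective _), count_indexWord]
    · refine List.count_eq_zero.2 fun hmem => h ?_
      obtain ⟨i, _, hi⟩ := List.mem_map.1 hmem
      exact congrArg Prod.fst hi
  rw [coordWord, List.count_flatMap, sum_map_finRange]
  simp [hcount]

theorem coordWord_count_perm (l : List (Fin N × Fin n)) :
    (coordWord fun j i => l.count (j, i)).Perm l :=
  List.perm_iff_count.2 fun c => count_coordWord _ c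

theorem mderiv_eq_dirDeriv {F : Type} [NormedAddCommGroup F] [NormedSpace ℝ F]
    (α : Fin n → ℕ) (f : En n → F) :
    mderiv α f = dirDeriv ((indexWord α).map fun i => EuclideanSpace.single i 1) f := by
  rw [indexWord, List.map_flatMap, dirDeriv_flatMap]
  simp only [List.map_replicate, dirDeriv_replicate]
  rfl

theorem mderivN_eq_dirDeriv (A : Fin N → Fin n → ℕ) (g : (Fin N → En n) → ℂ) :
    mderivN A g = dirDeriv ((coordWord A).map coordVec) g := by
  simp only [coordWord, indexWord, List.map_flatMap, dirDeriv_flatMap, List.map_replicate,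
    dirDeriv_replicate]
  rfl

/-- A phase `φ(x, ξ)` as a function on `(ℝⁿ)²`, with `x` in slot `0` and `ξ` in slot `1`. -/
def pairPhase (φ : En n → En n → ℝ) (U : Fin 2 → En n) : ℝ := φ (U 0) (U 1)

theorem contDiff_pairPhase {φ : En n → En n → ℝ}
    (hφ : ContDiff ℝ (⊤ : ℕ∞) fun w : En n × En n => φ w.1 w.2) :
    ContDiff ℝ (⊤ : ℕ∞) (pairPhase φ) :=
  hφ.comp ((contDiff_apply ℝ (En n) (0 : Fin 2)).prodMk (contDiff_apply ℝ (En n) (1 : Fin 2)))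

theorem update_eq_update_zero_add_single {ι M : Type*} [DecidableEq ι] [AddZeroClass M]
    (u : ι → M) (j : ι) (z : M) :
    Function.update u j z = Function.update u j 0 + Pi.single j z := by
  funext k
  rcases eq_or_ne k j with rfl | hk
  · simp
  · simp [hk]

theorem dirDeriv_update {F : Type*} [NormedAddCommGroup F] [NormedSpace ℝ F]
    {f : (Fin N → En n) → F} (hf : ContDiff ℝ (⊤ : ℕ∞) f) (j : Fin N) (l : List (Fin n))
    (U : Fin N → En n) (y : En n) :
    dirDeriv (l.map fun i => EuclideanSpace.single i 1) (fun z => f (Function.update U j z)) y =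
      dirDeriv (l.map fun i => coordVec (j, i)) f (Function.update U j y) := by
  have hupdate : ∀ z, Function.update U j z =
      Function.update U j 0 + ContinuousLinearMap.single ℝ (fun _ => En n) j z :=
    update_eq_update_zero_add_single U j
  rw [funext fun z => congrArg f (hupdate z), dirDeriv_comp_add_clm hf, List.map_map, hupdate y]
  rfl

theorem mixedD_eq_dirDeriv {φ : En n → En n → ℝ}
    (hφ : ContDiff ℝ (⊤ : ℕ∞) fun w : En n × En n => φ w.1 w.2) (A : Fin 2 → Fin n → ℕ)
    (U : Fin 2 → En n) :
    mixedD (A 1) (A 0) φ (U 0) (U 1) =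
      dirDeriv ((coordWord A).map coordVec) (pairPhase φ) U := by
  have hΦ := contDiff_pairPhase hφ
  have hinner : ∀ ζ, mderiv (A 0) (fun y => φ y ζ) (U 0) =
      dirDeriv ((indexWord (A 0)).map fun i => coordVec (0, i)) (pairPhase φ)
        (Function.update U 1 ζ) := by
    intro ζ
    have h := dirDeriv_update hΦ 0 (indexWord (A 0)) (Function.update U 1 ζ) (U 0)
    have hslot : Function.update (Function.update U 1 ζ) 0 (U 0) = Function.update U 1 ζ :=
      Function.update_eq_self_iff.2 (by simp)
    rw [hslot] at h
    rw [mderiv_eq_dirDeriv, ← h]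
    simp [pairPhase]
  have hword : (coordWord A).Perm
      ((indexWord (A 1)).map (Prod.mk 1) ++ (indexWord (A 0)).map (Prod.mk 0)) := by
    simpa [coordWord, List.finRange_succ] using List.perm_append_comm
  rw [dirDeriv_perm hΦ (hword.map coordVec), List.map_append, dirDeriv_append, mixedD,
    mderiv_eq_dirDeriv]
  simp_rw [hinner]
  rw [dirDeriv_update (contDiff_dirDeriv hΦ _) 1 _ U, Function.update_eq_self]
  simp only [List.map_map, Function.comp_def]

theorem sum_coordVec (U : Fin N → En n) :
    U = ∑ c : Fin N × Fin n, U c.1 c.2 • (coordVec c : Fin N → En n) := by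
  funext j
  ext i
  simp [coordVec, Fintype.sum_prod_type, Finset.sum_apply, Pi.single_apply, Finset.sum_ite_eq]

theorem norm_iteratedFDeriv_le_sum_coordWord {F : Type*} [NormedAddCommGroup F]
    [NormedSpace ℝ F] {f : (Fin N → En n) → F} (hf : ContDiff ℝ (⊤ : ℕ∞) f) (k : ℕ)
    (U : Fin N → En n) :
    ‖iteratedFDeriv ℝ k f U‖ ≤ ∑ w : Fin k → Fin N × Fin n,
      ‖dirDeriv ((coordWord fun j i => (List.ofFn w).count (j, i)).map coordVec) f U‖ := by
  refine ContinuousMultilinearMap.opNorm_le_bound (by positivity) fun v => ?_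
  have hexpand : iteratedFDeriv ℝ k f U v = ∑ w : Fin k → Fin N × Fin n,
      (∏ q, v q (w q).1 (w q).2) •
        dirDeriv ((coordWord fun j i => (List.ofFn w).count (j, i)).map coordVec) f U := by
    calc iteratedFDeriv ℝ k f U v
        = iteratedFDeriv ℝ k f U fun q => ∑ c, v q c.1 c.2 • coordVec c := by
          simp only [← sum_coordVec]
      _ = _ := by
          rw [ContinuousMultilinearMap.map_sum]
          refine Finset.sum_congr rfl fun w _ => ?_
          rw [ContinuousMultilinearMap.map_smul_univ, iteratedFDeriv_apply_eq_dirDeriv hf,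
            dirDeriv_perm hf ((coordWord_count_perm _).map coordVec), List.map_ofFn]
          rfl
  have hcoord : ∀ (q : Fin k) (c : Fin N × Fin n), ‖v q c.1 c.2‖ ≤ ‖v q‖ := fun q c =>
    (PiLp.norm_apply_le (v q c.1) c.2).trans (norm_le_pi_norm (v q) c.1)
  rw [hexpand, Finset.sum_mul]
  refine norm_sum_le_of_le _ fun w _ => ?_
  rw [norm_smul, norm_prod, mul_comm]
  gcongr with q
  exact hcoord q (w q)

end CoordinateWords

section OrthantRepresentation

open Set Filter Topology

theorem rpow_decay_le_rpow_decay {B s t p : ℝ} (hB : 0 ≤ B) (hs : 0 ≤ s) (hst : s ≤ t)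
    (hp : p ≤ 0) : B * (1 + t) ^ p ≤ B * (1 + s) ^ p :=
  mul_le_mul_of_nonneg_left
    (Real.rpow_le_rpow_of_nonpos (by linarith) (by linarith) hp) hB

theorem integrable_one_add_abs_rpow {r : ℝ} (hr : r < -1) :
    Integrable fun x : ℝ => (1 + |x|) ^ r := by
  simpa using integrable_one_add_norm (E := ℝ) (μ := volume) (r := -r) (by simp; linarith)

theorem tendsto_const_mul_one_add_abs_rpow {r : ℝ} (hr : r < 0) (B : ℝ) :
    Tendsto (fun s : ℝ => B * (1 + |s|) ^ r) atTop (𝓝 0) := by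
  have hbase : Tendsto (fun s : ℝ => 1 + |s|) atTop atTop :=
    tendsto_atTop_add_const_left _ _ tendsto_abs_atTop_atTop
  simpa [Function.comp_def] using
    ((tendsto_rpow_neg_atTop (y := -r) (by linarith)).comp hbase).const_mul B

theorem integrable_of_norm_le_rpow_decay {d : ℕ} {F : Type*} [NormedAddCommGroup F] {m B : ℝ}
    (hm : m < 0) {f : (Fin d → ℝ) → F} (hf : Continuous f)
    (hB : ∀ x, ‖f x‖ ≤ B * (1 + ‖x‖) ^ (m - d)) : Integrable f := by
  have hweight := integrable_one_add_norm (E := Fin d → ℝ) (μ := volume) (r := -(m - d))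
    (by simp; linarith)
  rw [neg_neg] at hweight
  exact (hweight.const_mul B).mono' hf.aestronglyMeasurable (ae_of_all _ hB)

theorem integral_fin_snoc {F : Type*} [NormedAddCommGroup F] [NormedSpace ℝ F] {d : ℕ}
    {f : (Fin (d + 1) → ℝ) → F} (hf : Integrable f) :
    ∫ y, f y = ∫ s : ℝ, ∫ z : Fin d → ℝ, f (Fin.snoc z s) := by
  have hsplit := (volume_preserving_piFinSuccAbove (fun _ : Fin (d + 1) => ℝ) (Fin.last d)).symm
  have hsnoc : ∀ p : ℝ × (Fin d → ℝ),
      (MeasurableEquiv.piFinSuccAbove (fun _ => ℝ) (Fin.last d)).symm p =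
        (Fin.snoc p.2 p.1 : Fin (d + 1) → ℝ) := fun p => Fin.insertNth_last' p.1 p.2
  have hint := (hsplit.integrable_comp_emb (MeasurableEquiv.measurableEmbedding _)).2 hf
  rw [← hsplit.integral_comp (MeasurableEquiv.measurableEmbedding _)]
  simp only [Function.comp_def, hsnoc] at hint ⊢
  exact integral_prod _ hint

theorem eq_neg_integral_Ici_of_hasDerivAt {F : Type*} [NormedAddCommGroup F] [NormedSpace ℝ F]
    [CompleteSpace F] {m B : ℝ} (hm : m < 0) {f f' : ℝ → F} (hf : ∀ s, HasDerivAt f (f' s) s)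
    (hf' : Continuous f') (hfB : ∀ s, ‖f s‖ ≤ B * (1 + |s|) ^ m)
    (hf'B : ∀ s, ‖f' s‖ ≤ B * (1 + |s|) ^ (m - 1)) (t : ℝ) :
    f t = -∫ s in Ici t, f' s := by
  have hint : Integrable f' := ((integrable_one_add_abs_rpow (by linarith)).const_mul B).mono'
    hf'.aestronglyMeasurable (ae_of_all _ hf'B)
  have hzero : Tendsto f atTop (𝓝 0) :=
    squeeze_zero_norm hfB (tendsto_const_mul_one_add_abs_rpow hm B)
  rw [integral_Ici_eq_integral_Ioi,
    integral_Ioi_of_hasDerivAt_of_tendsto' (fun s _ => hf s) hint.integrableOn hzero]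
  simp

variable {d : ℕ} {F : Type*} [NormedAddCommGroup F] [NormedSpace ℝ F]

theorem snoc_eq_add_extend (z : Fin d → ℝ) (s : ℝ) :
    (Fin.snoc z s : Fin (d + 1) → ℝ) = Pi.single (Fin.last d) s +
      (ContinuousLinearMap.pi (Fin.lastCases 0 ContinuousLinearMap.proj) :
        (Fin d → ℝ) →L[ℝ] Fin (d + 1) → ℝ) z := by
  funext i
  refine Fin.lastCases ?_ (fun i => ?_) i
  · simp
  · simp

theorem norm_le_norm_snoc (z : Fin d → ℝ) (s : ℝ) :
    ‖z‖ ≤ ‖(Fin.snoc z s : Fin (d + 1) → ℝ)‖ :=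
  (pi_norm_le_iff_of_nonneg (norm_nonneg _)).2 fun i => by
    simpa using norm_le_pi_norm (Fin.snoc z s : Fin (d + 1) → ℝ) i.castSucc

theorem abs_le_norm_snoc (z : Fin d → ℝ) (s : ℝ) :
    |s| ≤ ‖(Fin.snoc z s : Fin (d + 1) → ℝ)‖ := by
  simpa using norm_le_pi_norm (Fin.snoc z s : Fin (d + 1) → ℝ) (Fin.last d)

theorem dirDeriv_comp_snoc {f : (Fin (d + 1) → ℝ) → F} (hf : ContDiff ℝ (⊤ : ℕ∞) f) (s : ℝ)
    (l : List (Fin d)) (z : Fin d → ℝ) :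
    dirDeriv (l.map fun i => Pi.single i 1) (fun y => f (Fin.snoc y s)) z =
      dirDeriv ((l.map Fin.castSucc).map fun i => Pi.single i 1) f (Fin.snoc z s) := by
  simp only [snoc_eq_add_extend]
  rw [dirDeriv_comp_add_clm hf, List.map_map, List.map_map]
  have hbasis : ∀ i : Fin d, (ContinuousLinearMap.pi (Fin.lastCases 0 ContinuousLinearMap.proj) :
      (Fin d → ℝ) →L[ℝ] Fin (d + 1) → ℝ) (Pi.single i 1) = Pi.single i.castSucc 1 := by
    intro i
    funext k
    refine Fin.lastCases ?_ (fun k => ?_) k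
    · simp
    · simp [Pi.single_apply]
  simp only [Function.comp_def, hbasis]

theorem hasDerivAt_snoc {f : (Fin (d + 1) → ℝ) → F} (hf : ContDiff ℝ (⊤ : ℕ∞) f)
    (z : Fin d → ℝ) (s : ℝ) :
    HasDerivAt (fun s => f (Fin.snoc z s))
      (dirDeriv [Pi.single (Fin.last d) 1] f (Fin.snoc z s)) s := by
  have hsnoc : HasDerivAt (fun s => (Fin.snoc z s : Fin (d + 1) → ℝ))
      (Pi.single (Fin.last d) 1) s := by
    refine hasDerivAt_pi.2 (Fin.lastCases ?_ fun i => ?_)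
    · simpa using hasDerivAt_id' s
    · simpa using hasDerivAt_const s (z i)
  exact (hf.differentiable (by simp) _).hasFDerivAt.comp_hasDerivAt s hsnoc

theorem setIntegral_Ici_fin_snoc {f : (Fin (d + 1) → ℝ) → F} (hf : Integrable f)
    (z : Fin d → ℝ) (t : ℝ) :
    ∫ y in Ici (Fin.snoc z t : Fin (d + 1) → ℝ), f y =
      ∫ s in Ici t, ∫ y in Ici z, f (Fin.snoc y s) := by
  have hmem : ∀ (y : Fin d → ℝ) (s : ℝ),
      (Fin.snoc y s : Fin (d + 1) → ℝ) ∈ Ici (Fin.snoc z t : Fin (d + 1) → ℝ) ↔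
        s ∈ Ici t ∧ y ∈ Ici z := fun y s => by
    simp [Pi.le_def, Fin.forall_fin_succ', and_comm]
  rw [← integral_indicator measurableSet_Ici, integral_fin_snoc (hf.indicator measurableSet_Ici),
    ← integral_indicator measurableSet_Ici]
  refine integral_congr_ae (ae_of_all _ fun s => ?_)
  by_cases hs : s ∈ Ici t
  · simp only [indicator, hmem, hs, true_and, if_true, ← integral_indicator measurableSet_Ici]
  · simp only [indicator, hmem, hs, false_and, if_false, integral_zero]

theorem contDiff_comp_snoc {f : (Fin (d + 1) → ℝ) → F} (hf : ContDiff ℝ (⊤ : ℕ∞) f) (s : ℝ) :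
    ContDiff ℝ (⊤ : ℕ∞) fun y : Fin d → ℝ => f (Fin.snoc y s) := by
  simp only [snoc_eq_add_extend]
  exact hf.comp (contDiff_const.add (ContinuousLinearMap.contDiff _))

theorem dirDeriv_comp_snoc_dirDeriv_last {f : (Fin (d + 1) → ℝ) → F}
    (hf : ContDiff ℝ (⊤ : ℕ∞) f) (s : ℝ) (l : List (Fin d)) (y : Fin d → ℝ) :
    dirDeriv (l.map fun i => Pi.single i 1)
        (fun y => dirDeriv [Pi.single (Fin.last d) 1] f (Fin.snoc y s)) y =
      dirDeriv ((l.map Fin.castSucc ++ [Fin.last d]).map fun i => Pi.single i 1) f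
        (Fin.snoc y s) := by
  rw [dirDeriv_comp_snoc (contDiff_dirDeriv hf _), ← dirDeriv_append, List.map_append,
    List.map_singleton]

theorem eq_neg_integral_Ici_dirDeriv_last [CompleteSpace F] {m B : ℝ} (hm : m < 0)
    {f : (Fin (d + 1) → ℝ) → F} (hf : ContDiff ℝ (⊤ : ℕ∞) f)
    (hfB : ∀ x, ‖f x‖ ≤ B * (1 + ‖x‖) ^ m)
    (hf'B : ∀ x, ‖dirDeriv [Pi.single (Fin.last d) 1] f x‖ ≤ B * (1 + ‖x‖) ^ (m - 1))
    (z : Fin d → ℝ) (t : ℝ) :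
    f (Fin.snoc z t) =
      -∫ s in Ici t, dirDeriv [Pi.single (Fin.last d) 1] f (Fin.snoc z s) := by
  have hB : 0 ≤ B := by simpa using (norm_nonneg _).trans (hfB 0)
  refine eq_neg_integral_Ici_of_hasDerivAt (B := B) hm (hasDerivAt_snoc hf z)
    ((contDiff_dirDeriv hf _).continuous.comp (by fun_prop)) (fun s => ?_) (fun s => ?_) t
  · exact (hfB _).trans
      (rpow_decay_le_rpow_decay hB (abs_nonneg s) (abs_le_norm_snoc z s) hm.le)
  · exact (hf'B _).trans
      (rpow_decay_le_rpow_decay hB (abs_nonneg s) (abs_le_norm_snoc z s) (by linarith))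

theorem eq_integral_Ici_dirDeriv [CompleteSpace F] {m B : ℝ} (hm : m < 0)
    {f : (Fin d → ℝ) → F} (hf : ContDiff ℝ (⊤ : ℕ∞) f)
    (hB : ∀ l : List (Fin d), l.length ≤ d → ∀ x,
      ‖dirDeriv (l.map fun i => Pi.single i 1) f x‖ ≤ B * (1 + ‖x‖) ^ (m - l.length))
    (x : Fin d → ℝ) :
    f x = (-1 : ℝ) ^ d •
      ∫ y in Ici x, dirDeriv ((List.finRange d).map fun i => Pi.single i 1) f y := by
  induction d generalizing m with
  | zero =>
    rw [Measure.volume_pi_eq_dirac, setIntegral_dirac]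
    simp [Subsingleton.elim (fun a : Fin 0 => isEmptyElim a) x]
  | succ d ih =>
    obtain ⟨z, t, rfl⟩ : ∃ z t, x = Fin.snoc z t :=
      ⟨Fin.init x, x (Fin.last d), (Fin.snoc_init_self x).symm⟩
    have hB₀ : 0 ≤ B := by simpa using (norm_nonneg _).trans (hB [] (by simp) 0)
    set g := dirDeriv [Pi.single (Fin.last d) 1] f
    set D := dirDeriv ((List.finRange (d + 1)).map fun i => Pi.single i 1) f
    have hg : ContDiff ℝ (⊤ : ℕ∞) g := contDiff_dirDeriv hf _
    have hinner : ∀ s, g (Fin.snoc z s) = (-1 : ℝ) ^ d • ∫ y in Ici z, D (Fin.snoc y s) := by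
      intro s
      refine (ih (m := m - 1) (by linarith) (contDiff_comp_snoc hg s) (fun l hl y => ?_) z).trans ?_
      · rw [dirDeriv_comp_snoc_dirDeriv_last hf]
        have horder : m - ((l.map Fin.castSucc ++ [Fin.last d]).length : ℝ) =
            m - 1 - l.length := by simp; ring
        refine (hB _ (by simpa using hl) _).trans ?_
        rw [horder]
        refine rpow_decay_le_rpow_decay hB₀ (norm_nonneg _) (norm_le_norm_snoc y s) ?_
        linarith [(Nat.cast_nonneg l.length : (0 : ℝ) ≤ _)]
      · simp only [g, D, dirDeriv_comp_snoc_dirDeriv_last hf, List.finRange_succ_last]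
    have houter : f (Fin.snoc z t) = -∫ s in Ici t, g (Fin.snoc z s) :=
      eq_neg_integral_Ici_dirDeriv_last hm hf (fun y => by simpa using hB [] (by simp) y)
        (fun y => by simpa using hB [Fin.last d] (by simp) y) z t
    have hint : Integrable D :=
      integrable_of_norm_le_rpow_decay hm (contDiff_dirDeriv hf _).continuous fun x => by
        simpa using hB (List.finRange (d + 1)) (by simp) x
    rw [setIntegral_Ici_fin_snoc hint, houter]
    simp only [hinner]
    rw [integral_smul, pow_succ, mul_neg_one, neg_smul]

end OrthantRepresentation

section SeparationOfVariables

open Set Filter Topology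

variable {N n : ℕ}

/-- The lower orthant `{ξ | ξ ≤ u}` with vertex `u`. -/
def orthant (u : En n) : Set (En n) := {ξ | ∀ i, ξ i ≤ u i}

/-- The product weight `∏ᵢ (1 + |uᵢ|)^r`. -/
def decayWeight (r : ℝ) (u : En n) : ℝ := ∏ i, (1 + |u i|) ^ r

/-- The weighted average over `u` of the integrals of `g` truncated to the orthants `ξ ≤ u`. It
replaces the integral of one factor once the variables of an amplitude are separated. -/
def orthantAverage (r : ℝ) (g : En n → ℂ) : ℝ≥0∞ :=
  ∫⁻ u, ENNReal.ofReal (decayWeight r u) * ‖∫ ξ in orthant u, g ξ‖ₑ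

/-- The linear isomorphism `(ℝⁿ)^N ≃ ℝ^(Nn)` listing the coordinates of all the slots. -/
def flattenCoords (N n : ℕ) : (Fin N → En n) ≃L[ℝ] (Fin (N * n) → ℝ) :=
  LinearEquiv.toContinuousLinearEquiv
    { toFun := fun U k => U (finProdFinEquiv.symm k).1 (finProdFinEquiv.symm k).2
      invFun := fun x j => WithLp.toLp 2 fun i => x (finProdFinEquiv (j, i))
      map_add' := fun _ _ => rfl
      map_smul' := fun _ _ => rfl
      left_inv := fun U => by ext; simp
      right_inv := fun x => funext fun k => congrArg x (finProdFinEquiv.apply_symm_apply k) }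

theorem flattenCoords_apply (U : Fin N → En n) (k : Fin (N * n)) :
    flattenCoords N n U k = U (finProdFinEquiv.symm k).1 (finProdFinEquiv.symm k).2 := rfl

theorem flattenCoords_symm_apply (x : Fin (N * n) → ℝ) (j : Fin N) (i : Fin n) :
    (flattenCoords N n).symm x j i = x (finProdFinEquiv (j, i)) := rfl

theorem flattenCoords_symm_single (k : Fin (N * n)) :
    (flattenCoords N n).symm (Pi.single k 1) = coordVec (finProdFinEquiv.symm k) := by
  obtain ⟨c, rfl⟩ := finProdFinEquiv.surjective k
  ext j i
  rw [flattenCoords_symm_apply, Equiv.symm_apply_apply, coordVec]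
  rcases eq_or_ne j c.1 with rfl | hj
  · simp [Pi.single_apply, Prod.ext_iff]
  · simp [Prod.ext_iff, hj]

theorem volume_preserving_flattenCoords :
    MeasurePreserving (flattenCoords N n) volume volume := by
  refine ⟨(flattenCoords N n).continuous.measurable, (Measure.pi_eq fun s hs => ?_).symm⟩
  have hpreimage : flattenCoords N n ⁻¹' univ.pi s = univ.pi fun j =>
      (@WithLp.ofLp 2 (Fin n → ℝ)) ⁻¹' univ.pi fun i => s (finProdFinEquiv (j, i)) := by
    ext U
    rw [mem_preimage, mem_univ_pi, finProdFinEquiv.symm.forall_congr_left]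
    simp [flattenCoords_apply]
  rw [Measure.map_apply (flattenCoords N n).continuous.measurable (MeasurableSet.univ_pi hs),
    hpreimage, volume_pi_pi]
  simp only [(PiLp.volume_preserving_ofLp (Fin n)).measure_preimage
    (MeasurableSet.univ_pi fun _ => hs _).nullMeasurableSet, volume_pi_pi]
  rw [← Fintype.prod_prod_type', ← finProdFinEquiv.prod_comp]

theorem norm_le_norm_flattenCoords_symm (x : Fin (N * n) → ℝ) :
    ‖x‖ ≤ ‖(flattenCoords N n).symm x‖ := by
  refine (pi_norm_le_iff_of_nonneg (norm_nonneg _)).2 fun k => ?_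
  obtain ⟨⟨j, i⟩, rfl⟩ := finProdFinEquiv.surjective k
  rw [← flattenCoords_symm_apply x j i]
  exact (PiLp.norm_apply_le _ i).trans (norm_le_pi_norm ((flattenCoords N n).symm x) j)

theorem dirDeriv_comp_flattenCoords_symm {F : Type*} [NormedAddCommGroup F] [NormedSpace ℝ F]
    {b : (Fin N → En n) → F} (hb : ContDiff ℝ (⊤ : ℕ∞) b) (l : List (Fin (N * n)))
    (x : Fin (N * n) → ℝ) :
    dirDeriv (l.map fun k => Pi.single k 1) (fun y => b ((flattenCoords N n).symm y)) x =
      dirDeriv ((l.map finProdFinEquiv.symm).map coordVec) b ((flattenCoords N n).symm x) := by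
  have h := dirDeriv_comp_add_clm hb 0 ((flattenCoords N n).symm : (Fin (N * n) → ℝ) →L[ℝ] _)
    (l.map fun k => Pi.single k 1)
  simp only [zero_add, ContinuousLinearEquiv.coe_coe, List.map_map, Function.comp_def,
    flattenCoords_symm_single] at h ⊢
  exact congrFun h x

theorem measurableSet_orthant : MeasurableSet {p : En n × En n | p.2 ∈ orthant p.1} := by
  have hInter : {p : En n × En n | p.2 ∈ orthant p.1} = ⋂ i, {p | p.2 i ≤ p.1 i} := by
    ext; simp [orthant]
  rw [hInter]
  exact (isClosed_iInter fun i => isClosed_le (by fun_prop) (by fun_prop)).measurableSet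

theorem measurableSet_forall_mem_orthant :
    MeasurableSet {p : (Fin N → En n) × (Fin N → En n) | ∀ j, p.2 j ∈ orthant (p.1 j)} := by
  simp only [Set.ofPred_forall]
  exact MeasurableSet.iInter fun j => measurableSet_orthant.preimage
    (f := fun p : (Fin N → En n) × (Fin N → En n) => (p.1 j, p.2 j)) (by fun_prop)

theorem measurable_enorm_setIntegral_orthant {α : Type*} [MeasurableSpace α] {F : α → En n → ℂ}
    (hF : StronglyMeasurable (Function.uncurry F)) :
    Measurable fun p : α × En n => ‖∫ ξ in orthant p.2, F p.1 ξ‖ₑ := by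
  have hind : StronglyMeasurable fun q : (α × En n) × En n =>
      (orthant q.1.2).indicator (F q.1.1) q.2 :=
    (hF.comp_measurable (g := fun q : (α × En n) × En n => (q.1.1, q.2)) (by fun_prop)).indicator
      (measurableSet_orthant.preimage
        (f := fun q : (α × En n) × En n => (q.1.2, q.2)) (by fun_prop))
  have horthant (u : En n) : MeasurableSet (orthant u) :=
    measurableSet_orthant.preimage (measurable_prodMk_left (x := u))
  simp only [← integral_indicator (horthant _)]
  exact (hind.integral_prod_right' (ν := volume)).measurable.enorm

theorem lintegral_fin_prod_eq_prod {X : Type*} [MeasureSpace X]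
    [SigmaFinite (volume : Measure X)] {f : Fin N → X → ℝ≥0∞} (hf : ∀ j, Measurable (f j)) :
    ∫⁻ U : Fin N → X, ∏ j, f j (U j) = ∏ j, ∫⁻ u, f j u := by
  induction N with
  | zero =>
    rw [Measure.volume_pi_eq_dirac]
    simp
  | succ N ih =>
    have hsplit := (volume_preserving_piFinSuccAbove (fun _ : Fin (N + 1) => X) 0).symm
    have hcons : ∀ p : X × (Fin N → X),
        (MeasurableEquiv.piFinSuccAbove (fun _ => X) 0).symm p = (Fin.cons p.1 p.2 :
          Fin (N + 1) → X) := fun p => Fin.insertNth_zero' p.1 p.2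
    have htail : Measurable fun y : Fin N → X => ∏ j : Fin N, f j.succ (y j) :=
      Finset.measurable_prod _ fun j _ => (hf _).comp (measurable_pi_apply j)
    rw [← hsplit.lintegral_comp_emb (MeasurableEquiv.measurableEmbedding _)]
    simp only [hcons, Fin.prod_univ_succ, Fin.cons_zero, Fin.cons_succ]
    rw [← ih fun j => hf j.succ]
    exact lintegral_prod_mul (hf 0).aemeasurable htail.aemeasurable

theorem decayWeight_nonneg (r : ℝ) (u : En n) : 0 ≤ decayWeight r u :=
  Finset.prod_nonneg fun _ _ => by positivity

theorem measurable_decayWeight (r : ℝ) : Measurable (decayWeight r : En n → ℝ) := by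
  unfold decayWeight
  fun_prop

theorem lintegral_decayWeight_lt_top {r : ℝ} (hr : r < -1) :
    ∫⁻ u : En n, ENNReal.ofReal (decayWeight r u) < ⊤ := by
  have hint : Integrable fun y : Fin n → ℝ => ∏ i, (1 + |y i|) ^ r :=
    Integrable.fintype_prod (μ := fun _ => volume) fun _ => integrable_one_add_abs_rpow hr
  exact ((PiLp.volume_preserving_ofLp (Fin n)).integrable_comp_emb
    (MeasurableEquiv.toLp 2 (Fin n → ℝ)).symm.measurableEmbedding).2 hint |>.lintegral_lt_top

theorem rpow_decay_le_prod_rpow {ι : Type*} [Fintype ι] {m S : ℝ} (hm : m < 0) {y : ι → ℝ}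
    (hS : 0 ≤ S) (hy : ∀ i, |y i| ≤ S) :
    (1 + S) ^ (m - Fintype.card ι) ≤
      ∏ i, (1 + |y i|) ^ (-1 + m / (Fintype.card ι + 1)) := by
  set K := Fintype.card ι
  have hneg : m / (K + 1 : ℝ) < 0 := div_neg_of_neg_of_pos hm (by positivity)
  have hexp : m - K ≤ (-1 + m / (K + 1)) * K := by
    have : m ≤ m / (K + 1) * K := by
      rw [div_mul_eq_mul_div, le_div_iff₀ (by positivity)]
      nlinarith
    linarith
  calc (1 + S) ^ (m - K) ≤ (1 + S) ^ ((-1 + m / (K + 1)) * K) :=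
        Real.rpow_le_rpow_of_exponent_le (by linarith) hexp
    _ = ∏ _i : ι, (1 + S) ^ (-1 + m / (K + 1)) := by
        rw [Real.rpow_mul (by linarith), Real.rpow_natCast, Finset.prod_const, Finset.card_univ]
    _ ≤ _ := Finset.prod_le_prod (fun i _ => by positivity) fun i _ =>
        Real.rpow_le_rpow_of_nonpos (by positivity) (by linarith [hy i]) (by linarith)

theorem rpow_decay_le_prod_decayWeight {m : ℝ} (hm : m < 0) (U : Fin N → En n) :
    (1 + ‖U‖) ^ (m - (N * n : ℕ)) ≤ ∏ j, decayWeight (-1 + m / ((N * n : ℕ) + 1)) (U j) := by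
  have h := rpow_decay_le_prod_rpow (ι := Fin N × Fin n) (y := fun c => U c.1 c.2) hm
    (norm_nonneg U) fun c => (PiLp.norm_apply_le (U c.1) c.2).trans (norm_le_pi_norm U c.1)
  simpa only [Fintype.card_prod, Fintype.card_fin, Fintype.prod_prod_type,
    decayWeight] using h

/-- The word listing every coordinate of `(ℝⁿ)^N` once. -/
def allCoords (N n : ℕ) : List (Fin N × Fin n) :=
  (List.finRange (N * n)).map finProdFinEquiv.symm

theorem length_allCoords : (allCoords N n).length = N * n := by simp [allCoords]

/-- Decay of all coordinate derivatives of order at most `Nn`, with the gain of one power per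
derivative that characterizes a symbol of order `m` and type `1`. -/
def HasSymbolDecay {F : Type*} [NormedAddCommGroup F] [NormedSpace ℝ F] (m B : ℝ)
    (b : (Fin N → En n) → F) : Prop :=
  ∀ l : List (Fin N × Fin n), l.length ≤ N * n → ∀ U,
    ‖dirDeriv (l.map coordVec) b U‖ ≤ B * (1 + ‖U‖) ^ (m - l.length)

section Representation

variable {F : Type*} [NormedAddCommGroup F] [NormedSpace ℝ F] {b : (Fin N → En n) → F} {m B : ℝ}

theorem HasSymbolDecay.nonneg (hB : HasSymbolDecay m B b) : 0 ≤ B := by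
  simpa using (norm_nonneg _).trans (hB [] (by simp) 0)

theorem HasSymbolDecay.comp_flattenCoords_symm (hB : HasSymbolDecay m B b) (hm : m < 0)
    (hb : ContDiff ℝ (⊤ : ℕ∞) b) (l : List (Fin (N * n))) (hl : l.length ≤ N * n)
    (x : Fin (N * n) → ℝ) :
    ‖dirDeriv (l.map fun k => Pi.single k 1) (fun y => b ((flattenCoords N n).symm y)) x‖ ≤
      B * (1 + ‖x‖) ^ (m - l.length) := by
  rw [dirDeriv_comp_flattenCoords_symm hb]
  refine (hB _ (by simpa using hl) _).trans ?_
  rw [List.length_map]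
  refine rpow_decay_le_rpow_decay hB.nonneg (norm_nonneg x)
    (norm_le_norm_flattenCoords_symm x) ?_
  linarith [(Nat.cast_nonneg l.length : (0 : ℝ) ≤ _)]

theorem HasSymbolDecay.integrable_dirDeriv_allCoords (hB : HasSymbolDecay m B b) (hm : m < 0)
    (hb : ContDiff ℝ (⊤ : ℕ∞) b) : Integrable (dirDeriv ((allCoords N n).map coordVec) b) := by
  have hflat : Integrable fun x => dirDeriv ((allCoords N n).map coordVec) b
      ((flattenCoords N n).symm x) := by
    refine integrable_of_norm_le_rpow_decay (B := B) hm
      ((contDiff_dirDeriv hb _).continuous.comp (flattenCoords N n).symm.continuous) fun x => ?_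
    rw [allCoords, ← dirDeriv_comp_flattenCoords_symm hb]
    simpa using hB.comp_flattenCoords_symm hm hb (List.finRange (N * n)) (by simp) x
  simpa [Function.comp_def] using (volume_preserving_flattenCoords.integrable_comp_emb
    (flattenCoords N n).toHomeomorph.measurableEmbedding).2 hflat

theorem HasSymbolDecay.eq_integral [CompleteSpace F] (hB : HasSymbolDecay m B b) (hm : m < 0)
    (hb : ContDiff ℝ (⊤ : ℕ∞) b) (U : Fin N → En n) :
    b U = (-1 : ℝ) ^ (N * n) •
      ∫ W in {W | ∀ j, U j ∈ orthant (W j)}, dirDeriv ((allCoords N n).map coordVec) b W := by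
  have hpreimage : flattenCoords N n ⁻¹' Ici (flattenCoords N n U) =
      {W | ∀ j, U j ∈ orthant (W j)} := by
    ext W
    rw [mem_preimage, mem_Ici, Pi.le_def, finProdFinEquiv.symm.forall_congr_left]
    simp [flattenCoords_apply, orthant]
  have h := eq_integral_Ici_dirDeriv hm
    (hb.comp (flattenCoords N n).symm.contDiff) (hB.comp_flattenCoords_symm hm hb)
    (flattenCoords N n U)
  simp only [Function.comp_def, ContinuousLinearEquiv.symm_apply_apply,
    dirDeriv_comp_flattenCoords_symm hb] at h
  rw [h, ← volume_preserving_flattenCoords.setIntegral_preimage_emb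
    (flattenCoords N n).toHomeomorph.measurableEmbedding, hpreimage]
  simp only [ContinuousLinearEquiv.symm_apply_apply, allCoords]

end Representation

theorem integral_setIntegral_mul_comm {X Y : Type*} [MeasurableSpace X] [MeasurableSpace Y]
    {μ : Measure X} {ν : Measure Y} [SFinite μ] [SFinite ν] {S : Set (X × Y)}
    (hS : MeasurableSet S) {G : X → ℂ} {D : Y → ℂ} (hG : Integrable G μ) (hD : Integrable D ν) :
    ∫ x, (∫ y in {y | (x, y) ∈ S}, D y ∂ν) * G x ∂μ =
      ∫ y, D y * ∫ x in {x | (x, y) ∈ S}, G x ∂μ ∂ν := by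
  have hint : Integrable (S.indicator fun p : X × Y => G p.1 * D p.2) (μ.prod ν) :=
    (hG.mul_prod hD).indicator hS
  have hleft (x : X) : MeasurableSet {y | (x, y) ∈ S} := hS.preimage measurable_prodMk_left
  have hright (y : Y) : MeasurableSet {x | (x, y) ∈ S} := hS.preimage measurable_prodMk_right
  calc ∫ x, (∫ y in {y | (x, y) ∈ S}, D y ∂ν) * G x ∂μ
      = ∫ x, ∫ y, S.indicator (fun p : X × Y => G p.1 * D p.2) (x, y) ∂ν ∂μ := by
        refine integral_congr_ae (ae_of_all _ fun x => ?_)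
        simp only [mul_comm _ (G x), ← integral_const_mul, ← integral_indicator (hleft x),
          indicator, mem_ofPred_eq, mul_ite, mul_zero]
    _ = ∫ y, ∫ x, S.indicator (fun p : X × Y => G p.1 * D p.2) (x, y) ∂μ ∂ν :=
        integral_integral_swap hint
    _ = _ := by
        refine integral_congr_ae (ae_of_all _ fun y => ?_)
        simp only [mul_comm _ (D y), ← integral_const_mul, ← integral_indicator (hright y),
          indicator, mem_ofPred_eq, mul_ite, mul_zero]

theorem setIntegral_forall_mem_orthant_prod (g : Fin N → En n → ℂ) (W : Fin N → En n) :
    ∫ U in {U : Fin N → En n | ∀ j, U j ∈ orthant (W j)}, ∏ j, g j (U j) =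
      ∏ j, ∫ ξ in orthant (W j), g j ξ := by
  have hpi : {U : Fin N → En n | ∀ j, U j ∈ orthant (W j)} = univ.pi fun j => orthant (W j) := by
    ext; simp
  rw [hpi, volume_pi, Measure.restrict_pi_pi]
  exact integral_fintype_prod_eq_prod g

theorem HasSymbolDecay.integral_mul_prod_eq {b : (Fin N → En n) → ℂ} {m B : ℝ}
    (hB : HasSymbolDecay m B b) (hm : m < 0) (hb : ContDiff ℝ (⊤ : ℕ∞) b) {g : Fin N → En n → ℂ}
    (hg : ∀ j, Integrable (g j)) :
    ∫ U, b U * ∏ j, g j (U j) = (-1 : ℝ) ^ (N * n) •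
      ∫ W, dirDeriv ((allCoords N n).map coordVec) b W * ∏ j, ∫ ξ in orthant (W j), g j ξ := by
  have hswap := integral_setIntegral_mul_comm
    (S := Prod.swap ⁻¹' {p : (Fin N → En n) × (Fin N → En n) | ∀ j, p.2 j ∈ orthant (p.1 j)})
    (measurableSet_forall_mem_orthant.preimage measurable_swap)
    (Integrable.fintype_prod (μ := fun _ => volume) hg) (hB.integrable_dirDeriv_allCoords hm hb)
  simp only [mem_preimage, Prod.swap_prod_mk, mem_ofPred_eq, ← volume_pi,
    setIntegral_forall_mem_orthant_prod] at hswap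
  rw [← hswap, ← integral_smul]
  refine integral_congr_ae (ae_of_all _ fun U => ?_)
  simp only [hB.eq_integral hm hb U, smul_mul_assoc]

theorem HasSymbolDecay.enorm_integral_mul_prod_le {b : (Fin N → En n) → ℂ} {m B : ℝ}
    (hB : HasSymbolDecay m B b) (hm : m < 0) (hb : ContDiff ℝ (⊤ : ℕ∞) b) {g : Fin N → En n → ℂ}
    (hg : ∀ j, Integrable (g j)) (hgm : ∀ j, StronglyMeasurable (g j)) :
    ‖∫ U, b U * ∏ j, g j (U j)‖ₑ ≤
      ENNReal.ofReal B * ∏ j, orthantAverage (-1 + m / ((N * n : ℕ) + 1)) (g j) := by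
  set w : En n → ℝ := decayWeight (-1 + m / ((N * n : ℕ) + 1))
  have hw (u : En n) : 0 ≤ w u := decayWeight_nonneg _ u
  have hmeas (j : Fin N) :
      Measurable fun u => ENNReal.ofReal (w u) * ‖∫ ξ in orthant u, g j ξ‖ₑ :=
    (measurable_decayWeight _).ennreal_ofReal.mul <|
      (measurable_enorm_setIntegral_orthant (F := fun _ : Unit => g j)
        ((hgm j).comp_measurable measurable_snd)).comp (measurable_prodMk_left (x := ()))
  have hprod : Measurable fun W : Fin N → En n =>
      ∏ j, (ENNReal.ofReal (w (W j)) * ‖∫ ξ in orthant (W j), g j ξ‖ₑ) :=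
    Finset.measurable_fun_prod _ fun j _ => (hmeas j).comp (measurable_pi_apply j)
  have hpointwise (W : Fin N → En n) :
      ‖dirDeriv ((allCoords N n).map coordVec) b W * ∏ j, ∫ ξ in orthant (W j), g j ξ‖ₑ ≤
        ENNReal.ofReal B *
          ∏ j, (ENNReal.ofReal (w (W j)) * ‖∫ ξ in orthant (W j), g j ξ‖ₑ) := by
    have hD : ‖dirDeriv ((allCoords N n).map coordVec) b W‖ ≤ B * ∏ j, w (W j) := by
      refine (hB _ length_allCoords.le W).trans ?_
      rw [length_allCoords]
      exact mul_le_mul_of_nonneg_left (rpow_decay_le_prod_decayWeight hm W) hB.nonneg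
    simp only [← ofReal_norm, ← ENNReal.ofReal_mul (hw _), norm_mul, norm_prod]
    rw [← ENNReal.ofReal_prod_of_nonneg fun j _ =>
        mul_nonneg (hw _) (norm_nonneg _),
      ← ENNReal.ofReal_mul hB.nonneg, Finset.prod_mul_distrib, ← mul_assoc]
    gcongr
  have hsign : ‖(-1 : ℝ) ^ (N * n)‖ₑ = 1 := by simp [enorm_pow]
  rw [hB.integral_mul_prod_eq hm hb hg, enorm_smul, hsign, one_mul]
  refine (enorm_integral_le_lintegral_enorm _).trans ((lintegral_mono hpointwise).trans_eq ?_)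
  rw [lintegral_const_mul _ hprod, lintegral_fin_prod_eq_prod hmeas]
  rfl

end SeparationOfVariables

section WeightedAverages

open Set

variable {α β : Type*} [MeasurableSpace α] [MeasurableSpace β]

theorem sq_lintegral_mul_le {μ : Measure α} {f g : α → ℝ≥0∞} (hf : AEMeasurable f μ)
    (hg : AEMeasurable g μ) :
    (∫⁻ x, f x * g x ∂μ) ^ 2 ≤ (∫⁻ x, f x ^ 2 ∂μ) * ∫⁻ x, g x ^ 2 ∂μ := by
  refine (pow_le_pow_left₀ zero_le
    (ENNReal.lintegral_mul_le_Lp_mul_Lq μ Real.HolderConjugate.two_two hf hg) 2).trans_eq ?_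
  rw [mul_pow, ← ENNReal.rpow_natCast, ← ENNReal.rpow_natCast, ← ENNReal.rpow_mul,
    ← ENNReal.rpow_mul]
  norm_num

theorem sq_lintegral_weight_mul_le {μ : Measure α} {w h : α → ℝ≥0∞} (hw : AEMeasurable w μ)
    (hh : AEMeasurable h μ) :
    (∫⁻ x, w x * h x ∂μ) ^ 2 ≤ (∫⁻ x, w x ∂μ) * ∫⁻ x, w x * h x ^ 2 ∂μ := by
  have hsqrt (x : α) : w x ^ (1 / 2 : ℝ) * w x ^ (1 / 2 : ℝ) = w x := by
    rw [← ENNReal.rpow_add_of_nonneg _ _ (by norm_num) (by norm_num)]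
    norm_num
  have hcs := sq_lintegral_mul_le (hw.pow_const (1 / 2 : ℝ)) ((hw.pow_const (1 / 2 : ℝ)).mul hh)
  have hsq (x : α) : (w x ^ (1 / 2 : ℝ)) ^ 2 = w x := by rw [pow_two, hsqrt]
  simpa only [Pi.mul_apply, ← mul_assoc, mul_pow, hsqrt, hsq] using hcs

theorem lintegral_sq_lintegral_weight_mul_le {μ : Measure α} {ν : Measure β} [SFinite μ]
    [SFinite ν] {w : β → ℝ≥0∞} (hw : Measurable w) {h : α → β → ℝ≥0∞}
    (hh : Measurable (Function.uncurry h)) {K : ℝ≥0∞} (hK : ∀ y, ∫⁻ x, h x y ^ 2 ∂μ ≤ K) :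
    ∫⁻ x, (∫⁻ y, w y * h x y ∂ν) ^ 2 ∂μ ≤ (∫⁻ y, w y ∂ν) ^ 2 * K := by
  have hwh : Measurable (Function.uncurry fun x y => w y * h x y ^ 2) :=
    (hw.comp measurable_snd).mul (hh.pow_const 2)
  calc ∫⁻ x, (∫⁻ y, w y * h x y ∂ν) ^ 2 ∂μ
      ≤ ∫⁻ x, (∫⁻ y, w y ∂ν) * ∫⁻ y, w y * h x y ^ 2 ∂ν ∂μ := lintegral_mono fun x =>
        sq_lintegral_weight_mul_le hw.aemeasurable hh.of_uncurry_left.aemeasurable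
    _ = (∫⁻ y, w y ∂ν) * ∫⁻ y, w y * ∫⁻ x, h x y ^ 2 ∂μ ∂ν := by
        rw [lintegral_const_mul _ hwh.lintegral_prod_right,
          lintegral_lintegral_swap hwh.aemeasurable]
        congr 1
        exact lintegral_congr fun y => lintegral_const_mul _ (hh.of_uncurry_right.pow_const 2)
    _ ≤ (∫⁻ y, w y ∂ν) * ∫⁻ y, w y * K ∂ν := by
        gcongr with y
        exact hK y
    _ = (∫⁻ y, w y ∂ν) ^ 2 * K := by rw [lintegral_mul_const _ hw, ← mul_assoc, pow_two]

variable {n : ℕ}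

theorem measurableSet_orthant_apply (u : En n) : MeasurableSet (orthant u) :=
  measurableSet_orthant.preimage (measurable_prodMk_left (x := u))

theorem measurable_orthantAverage {F : α → En n → ℂ}
    (hF : StronglyMeasurable (Function.uncurry F)) (r : ℝ) :
    Measurable fun x => orthantAverage r (F x) :=
  Measurable.lintegral_prod_right' (f := fun p : α × En n =>
      ENNReal.ofReal (decayWeight r p.2) * ‖∫ ξ in orthant p.2, F p.1 ξ‖ₑ)
    (((measurable_decayWeight r).ennreal_ofReal.comp measurable_snd).mul
      (measurable_enorm_setIntegral_orthant hF))

theorem lintegral_sq_orthantAverage_le {μ : Measure α} [SFinite μ] {F : α → En n → ℂ}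
    (hF : StronglyMeasurable (Function.uncurry F)) {K : ℝ≥0∞}
    (hK : ∀ u, ∫⁻ x, ‖∫ ξ in orthant u, F x ξ‖ₑ ^ 2 ∂μ ≤ K) (r : ℝ) :
    ∫⁻ x, orthantAverage r (F x) ^ 2 ∂μ ≤
      (∫⁻ u : En n, ENNReal.ofReal (decayWeight r u)) ^ 2 * K :=
  lintegral_sq_lintegral_weight_mul_le (measurable_decayWeight r).ennreal_ofReal
    (measurable_enorm_setIntegral_orthant hF) hK

end WeightedAverages

section Plancherel

open FourierTransform

theorem lintegral_enorm_sq_eq_eLpNorm_sq {α F : Type*} [MeasurableSpace α]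
    [NormedAddCommGroup F] {μ : Measure α} (f : α → F) :
    ∫⁻ x, ‖f x‖ₑ ^ 2 ∂μ = eLpNorm f 2 μ ^ 2 := by
  simpa using (eLpNorm_nnreal_pow_eq_lintegral (f := f) (μ := μ) (p := 2) (by norm_num)).symm

section InnerProductSpace

variable {E : Type*} [NormedAddCommGroup E] [InnerProductSpace ℝ E] [FiniteDimensional ℝ E]
  [MeasurableSpace E] [BorelSpace E] {G : E → ℂ}

theorem continuous_fourier_of_integrable (hG : Integrable G) : Continuous (𝓕 G) :=
  VectorFourier.fourierIntegral_continuous Real.continuous_fourierChar continuous_inner hG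

theorem coeFn_fourier_toLp (hG : Integrable G) (hG2 : MemLp G 2) :
    (𝓕 (hG2.toLp G) : Lp (α := E) ℂ 2) =ᵐ[volume] 𝓕 G := by
  refine ae_eq_of_integral_contDiff_smul_eq ((Lp.memLp _).locallyIntegrable (by norm_num))
    (continuous_fourier_of_integrable hG).locallyIntegrable fun g hg hgs => ?_
  let γ : 𝓢(E, ℂ) := (hgs.comp_left (g := Complex.ofReal) (by simp)).toSchwartzMap
    (Complex.ofRealCLM.contDiff.comp hg)
  have hdistrib := congrArg (fun T => T γ) (Lp.fourier_toTemperedDistribution_eq (hG2.toLp G))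
  simp only [TemperedDistribution.fourier_apply, Lp.toTemperedDistribution_apply] at hdistrib
  have hflip := VectorFourier.integral_fourierIntegral_smul_eq_flip (μ := volume) (ν := volume)
    (e := Real.fourierChar) (L := innerₗ E) (f := γ) (g := G) Real.continuous_fourierChar
    continuous_inner γ.integrable hG
  rw [flip_innerₗ] at hflip
  calc ∫ x, g x • (𝓕 (hG2.toLp G) : Lp (α := E) ℂ 2 volume) x
      = ∫ x, (𝓕 γ : 𝓢(E, ℂ)) x • (hG2.toLp G) x := hdistrib.symm
    _ = ∫ x, (𝓕 γ : 𝓢(E, ℂ)) x • G x := integral_congr_ae <| by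
        filter_upwards [hG2.coeFn_toLp] with x hx
        rw [hx]
    _ = ∫ x, g x • 𝓕 G x := hflip

theorem lintegral_enorm_fourier_sq_le (hG : Integrable G) :
    ∫⁻ q, ‖𝓕 G q‖ₑ ^ 2 ≤ ∫⁻ t, ‖G t‖ₑ ^ 2 := by
  rw [lintegral_enorm_sq_eq_eLpNorm_sq, lintegral_enorm_sq_eq_eLpNorm_sq]
  by_cases hG2 : MemLp G 2
  · have hnorm := Lp.norm_fourier_eq (hG2.toLp G)
    rw [Lp.norm_def, Lp.norm_def, eLpNorm_congr_ae (coeFn_fourier_toLp hG hG2),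
      eLpNorm_congr_ae hG2.coeFn_toLp, ENNReal.toReal_eq_toReal_iff' _ hG2.2.ne] at hnorm
    · rw [hnorm]
    · rw [← eLpNorm_congr_ae (coeFn_fourier_toLp hG hG2)]
      exact (Lp.memLp _).2.ne
  · have htop : eLpNorm G 2 volume = ⊤ := by
      by_contra h
      exact hG2 ⟨hG.1, lt_top_iff_ne_top.2 h⟩
    simp [htop]

end InnerProductSpace

variable {n : ℕ}

theorem ft_eq_fourier (G : En n → ℂ) (q : En n) : ft G q = 𝓕 G ((2 * Real.pi)⁻¹ • q) := by
  rw [Real.fourier_eq', ft]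
  refine integral_congr_ae (ae_of_all _ fun y => ?_)
  have hphase : -2 * Real.pi * ((2 * Real.pi)⁻¹ * ⟪y, q⟫) = -⟪y, q⟫ := by
    field_simp
  simp only [inner_smul_right, smul_eq_mul]
  rw [hphase, Complex.ofReal_neg, neg_mul, mul_comm Complex.I]

theorem continuous_ft {G : En n → ℂ} (hG : Integrable G) : Continuous (ft G) := by
  rw [funext (ft_eq_fourier G)]
  exact (continuous_fourier_of_integrable hG).comp (continuous_const_smul _)

theorem integrable_ft_schwartzMap (f : 𝓢(En n, ℂ)) : Integrable (ft f) := by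
  rw [funext (ft_eq_fourier f), ← SchwartzMap.fourier_coe]
  exact (𝓕 f : 𝓢(En n, ℂ)).integrable.comp_smul (by positivity)

theorem lintegral_enorm_ft_sq_le {G : En n → ℂ} (hG : Integrable G) :
    ∫⁻ q, ‖ft G q‖ₑ ^ 2 ≤ ENNReal.ofReal ((2 * Real.pi) ^ n) * ∫⁻ t, ‖G t‖ₑ ^ 2 := by
  have hscale : (2 * Real.pi)⁻¹ ≠ 0 := by positivity
  have hjacobian : |(((2 * Real.pi)⁻¹) ^ Module.finrank ℝ (En n))⁻¹| = (2 * Real.pi) ^ n := by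
    rw [finrank_euclideanSpace_fin, inv_pow, inv_inv, abs_of_pos (by positivity)]
  have hmeas : Measurable fun q => ‖𝓕 G q‖ₑ ^ 2 :=
    (continuous_fourier_of_integrable hG).measurable.enorm.pow_const 2
  simp_rw [ft_eq_fourier]
  rw [← lintegral_map (μ := (volume : Measure (En n))) (f := fun q => ‖𝓕 G q‖ₑ ^ 2)
      (g := fun q : En n => (2 * Real.pi)⁻¹ • q) hmeas (by fun_prop),
    Measure.map_addHaar_smul _ hscale, lintegral_smul_measure, hjacobian, smul_eq_mul]
  exact mul_le_mul_right (lintegral_enorm_fourier_sq_le hG) _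

end Plancherel

section GlobalInversion

open Set Metric

theorem isCoveringMap_of_injOn_ball_of_surjOn_ball {X Y : Type*} [MetricSpace X] [MetricSpace Y]
    {f : X → Y} (hf : Continuous f) (hopen : IsOpenMap f) {δ ρ : ℝ} (hδ : 0 < δ) (hρ : 0 < ρ)
    (hinj : ∀ x, InjOn f (ball x (2 * δ)))
    (hsurj : ∀ x, SurjOn f (ball x δ) (ball (f x) ρ)) : IsCoveringMap f := by
  intro y
  let : TopologicalSpace (f ⁻¹' {y}) := ⊥
  have : DiscreteTopology (f ⁻¹' {y}) := ⟨rfl⟩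
  have exhaustive : f ⁻¹' ball y ρ ⊆ ⋃ z : f ⁻¹' {y}, ball z.1 δ := by
    intro x hx
    obtain ⟨z, hz, hzy⟩ := hsurj x (mem_ball_comm.1 hx)
    exact mem_iUnion.2 ⟨⟨z, hzy⟩, mem_ball_comm.1 hz⟩
  rcases isEmpty_or_nonempty (f ⁻¹' {y}) with hempty | ⟨⟨z₀, hz₀⟩⟩
  · refine (IsEvenlyCovered.of_preimage_eq_empty (f ⁻¹' {y}) (ball_mem_nhds y hρ) ?_)
      |>.to_isEvenlyCovered_preimage
    simpa only [iUnion_of_empty, subset_empty_iff] using exhaustive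
  have : Nonempty (f ⁻¹' {y}) := ⟨⟨z₀, hz₀⟩⟩
  have : Nonempty (Y → X) := ⟨fun _ => z₀⟩
  have surj (z : f ⁻¹' {y}) : SurjOn f (ball z.1 δ) (ball y ρ) := by
    simpa only [show f z.1 = y from z.2] using hsurj z.1
  have open_iff (z : f ⁻¹' {y}) {W : Set Y} (hW : W ⊆ ball y ρ) :
      IsOpen W ↔ IsOpen (f ⁻¹' W ∩ ball z.1 δ) := by
    refine ⟨fun h => (h.preimage hf).inter isOpen_ball, fun h => ?_⟩
    convert hopen _ h
    rw [inter_comm, image_inter_preimage, inter_eq_right.2 (hW.trans (surj z))]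
  have disjoint : Pairwise (Function.onFun Disjoint fun z : f ⁻¹' {y} => ball z.1 δ) := by
    refine fun z z' hne => disjoint_left.2 fun w hw hw' => hne (Subtype.ext ?_)
    refine hinj z.1 (mem_ball_self (by positivity)) ?_ (z.2.trans z'.2.symm)
    rw [mem_ball, two_mul]
    exact (dist_triangle_left _ _ w).trans_lt (add_lt_add hw' hw)
  refine (IsEvenlyCovered.of_trivialization
    (t := IsOpen.trivializationDiscrete (fun z : f ⁻¹' {y} => ball z.1 δ) (ball y ρ) isOpen_ball
      open_iff (fun z => (hinj z.1).mono (ball_subset_ball (by linarith))) surj disjoint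
      exhaustive) ?_).to_isEvenlyCovered_preimage
  exact mem_ball_self hρ

theorem injective_of_isCoveringMap {X Y : Type*} [TopologicalSpace X] [TopologicalSpace Y]
    [PreconnectedSpace X] [SimplyConnectedSpace Y] [LocallyPathConnectedSpace Y] {f : X → Y}
    (hf : IsCoveringMap f) : Function.Injective f := by
  intro x x' hxx'
  obtain ⟨s, ⟨hsx, hfs⟩, -⟩ := hf.existsUnique_continuousMap_lifts (.id Y) (f x) x rfl
  have hsf : s ∘ f = id := by
    refine hf.eq_of_comp_eq (s.continuous.comp hf.continuous) continuous_id ?_ x hsx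
    rw [← Function.comp_assoc, hfs]
    rfl
  calc x = s (f x) := hsx.symm
    _ = s (f x') := by rw [hxx']
    _ = x' := congrFun hsf x'

variable {E F : Type*} [NormedAddCommGroup E] [NormedSpace ℝ E]
  [NormedAddCommGroup F] [NormedSpace ℝ F]

theorem approximatesLinearOn_ball_of_lipschitzWith {f : E → F} {f' : E → E →L[ℝ] F} {M c : ℝ≥0}
    (hf : ∀ x, HasFDerivAt f (f' x) x) (hf' : LipschitzWith M f') {r : ℝ} (hr : M * r ≤ c)
    (x : E) : ApproximatesLinearOn f (f' x) (ball x r) c := by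
  intro y hy z hz
  refine (convex_ball x r).norm_image_sub_le_of_norm_hasFDerivWithin_le'
    (fun w _ => (hf w).hasFDerivWithinAt) (fun w hw => ?_) hz hy
  rw [← dist_eq_norm]
  exact (hf'.dist_le_mul w x).trans
    ((mul_le_mul_of_nonneg_left (mem_ball.1 hw).le M.2).trans hr)

theorem surjOn_ball_of_approximatesLinearOn [CompleteSpace E] {f : E → F} {A : E ≃L[ℝ] F} {x : E}
    {K : ℝ≥0} {r : ℝ} (hr : 0 < r) (hK : K⁻¹ ≤ ‖(A.symm : F →L[ℝ] E)‖₊⁻¹)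
    (hf : ApproximatesLinearOn f (A : E →L[ℝ] F) (ball x r) (2 * K)⁻¹) :
    SurjOn f (ball x r) (ball (f x) ((2 * K)⁻¹ * (r / 2))) := by
  have hball : closedBall x (r / 2) ⊆ ball x r := closedBall_subset_ball (by linarith)
  have hsurj := hf.surjOn_closedBall_of_nonlinearRightInverse A.toNonlinearRightInverse
    (by positivity) hball
  have hhalf : ((2 * K)⁻¹ : ℝ) ≤ ‖(A.symm : F →L[ℝ] E)‖⁻¹ - ((2 * K)⁻¹ : ℝ≥0) := by
    have hinv : (2 * K : ℝ)⁻¹ + (2 * K : ℝ)⁻¹ = (K : ℝ)⁻¹ := by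
      rw [mul_inv, ← add_mul]; norm_num
    have := NNReal.coe_le_coe.2 hK
    push_cast at this ⊢
    linarith
  exact hsurj.mono hball (ball_subset_closedBall.trans
    (closedBall_subset_closedBall (mul_le_mul_of_nonneg_right hhalf (by positivity))))

/- Hadamard's global inversion theorem: the inverse function theorem holds at a uniform scale, which
makes `f` a covering map of the simply connected space `F`. -/
theorem injective_of_norm_fderiv_symm_le [CompleteSpace E] {f : E → F} {f' : E → E ≃L[ℝ] F}
    {K M : ℝ≥0} (hf : ∀ x, HasFDerivAt f (f' x : E →L[ℝ] F) x)
    (hK : ∀ x, ‖((f' x).symm : F →L[ℝ] E)‖₊ ≤ K)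
    (hM : LipschitzWith M fun x => (f' x : E →L[ℝ] F)) : Function.Injective f := by
  rcases subsingleton_or_nontrivial E with _ | _
  · exact Function.injective_of_subsingleton f
  have hpos (x : E) : 0 < ‖((f' x).symm : F →L[ℝ] E)‖₊ := (f' x).nnnorm_symm_pos
  have hK0 : 0 < K := (hpos 0).trans_le (hK 0)
  have hKinv (x : E) : K⁻¹ ≤ ‖((f' x).symm : F →L[ℝ] E)‖₊⁻¹ := inv_anti₀ (hpos x) (hK x)
  have hc (x : E) : (2 * K)⁻¹ < ‖((f' x).symm : F →L[ℝ] E)‖₊⁻¹ :=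
    ((inv_lt_inv₀ (by positivity) hK0).2 (lt_two_mul_self hK0)).trans_le (hKinv x)
  obtain ⟨δ, hδ, hMδ⟩ : ∃ δ : ℝ, 0 < δ ∧ M * (2 * δ) ≤ ((2 * K)⁻¹ : ℝ≥0) := by
    refine ⟨(4 * (M + 1) * K)⁻¹, by positivity, ?_⟩
    push_cast
    rw [show (M : ℝ) * (2 * (4 * (M + 1) * K : ℝ)⁻¹) = (M / (M + 1)) * (2 * K : ℝ)⁻¹ by
      field_simp; ring]
    exact mul_le_of_le_one_left (by positivity) (div_le_one_of_le₀ (by simp) (by positivity))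
  have hlin (x : E) := approximatesLinearOn_ball_of_lipschitzWith hf hM hMδ x
  have hopen : IsOpenMap f := IsOpenMap.of_nhds_le fun x =>
    ((hlin x).map_nhds_eq (f' x).toNonlinearRightInverse
      (ball_mem_nhds x (by positivity)) (.inr (hc x))).ge
  have hsurj (x : E) : SurjOn f (ball x δ) (ball (f x) ((2 * K)⁻¹ * (δ / 2))) :=
    surjOn_ball_of_approximatesLinearOn hδ (hKinv x)
      ((hlin x).mono_set (ball_subset_ball (by linarith)))
  exact injective_of_isCoveringMap (isCoveringMap_of_injOn_ball_of_surjOn_ball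
    (continuous_iff_continuousAt.2 fun x => (hf x).continuousAt) hopen hδ (by positivity)
    (fun x => (hlin x).injOn (.inr (hc x))) hsurj)

end GlobalInversion

section ChangeOfVariables

open Set

section Haar

variable {E : Type*} [NormedAddCommGroup E] [NormedSpace ℝ E] [FiniteDimensional ℝ E]

theorem exists_nnnorm_symm_le {c : ℝ} (hc : 0 < c) (M : ℝ) :
    ∃ K : ℝ≥0, ∀ A : E ≃L[ℝ] E, c ≤ |(A : E →L[ℝ] E).det| → ‖(A : E →L[ℝ] E)‖ ≤ M →
      ‖(A.symm : E →L[ℝ] E)‖₊ ≤ K := by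
  have : CompleteSpace E := FiniteDimensional.complete ℝ E
  let S : Set (E →L[ℝ] E) := {A | c ≤ |A.det| ∧ ‖A‖ ≤ M}
  have hcompact : IsCompact S := by
    refine Metric.isCompact_of_isClosed_isBounded ?_ ?_
    · exact (isClosed_le continuous_const ContinuousLinearMap.continuous_det.abs).inter
        (isClosed_le continuous_norm continuous_const)
    · exact (Metric.isBounded_closedBall (x := 0) (r := M)).subset fun A hA =>
        mem_closedBall_zero_iff.2 hA.2
  have hcont : ContinuousOn (Ring.inverse : (E →L[ℝ] E) → E →L[ℝ] E) S := by
    intro A hA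
    have hdet : A.det ≠ 0 := abs_pos.1 (hc.trans_le hA.1)
    exact (NormedRing.inverse_continuousAt
      (A.toContinuousLinearEquivOfDetNeZero hdet).toUnit).continuousWithinAt
  obtain ⟨K, hK⟩ := hcompact.exists_bound_of_continuousOn hcont
  refine ⟨K.toNNReal, fun A hdet hM => ?_⟩
  have h := hK A ⟨hdet, hM⟩
  rw [ContinuousLinearMap.ringInverse_equiv, ContinuousLinearMap.inverse_equiv] at h
  exact NNReal.le_toNNReal_of_coe_le h

variable [MeasurableSpace E] [BorelSpace E] (μ : Measure E) [μ.IsAddHaarMeasure]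
  {f : E → E} {f' : E → E →L[ℝ] E} {c : ℝ}

theorem lintegral_comp_le_of_injective (hf : ∀ x, HasFDerivAt f (f' x) x)
    (hinj : Function.Injective f) (hc : 0 < c) (hdet : ∀ x, c ≤ |(f' x).det|) (G : E → ℝ≥0∞) :
    ∫⁻ x, G (f x) ∂μ ≤ ENNReal.ofReal c⁻¹ * ∫⁻ y, G y ∂μ := by
  have hcv := lintegral_image_eq_lintegral_abs_det_fderiv_mul μ MeasurableSet.univ
    (fun x _ => (hf x).hasFDerivWithinAt) hinj.injOn G
  rw [Measure.restrict_univ] at hcv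
  have hle : ENNReal.ofReal c * ∫⁻ x, G (f x) ∂μ ≤ ∫⁻ y, G y ∂μ :=
    calc ENNReal.ofReal c * ∫⁻ x, G (f x) ∂μ
        ≤ ∫⁻ x, ENNReal.ofReal c * G (f x) ∂μ := lintegral_const_mul_le _ _
      _ ≤ ∫⁻ x, ENNReal.ofReal |(f' x).det| * G (f x) ∂μ := by
          gcongr with x
          exact hdet x
      _ = ∫⁻ y in f '' univ, G y ∂μ := hcv.symm
      _ ≤ ∫⁻ y, G y ∂μ := setLIntegral_le_lintegral _ _
  rw [ENNReal.ofReal_inv_of_pos hc, mul_comm, ← div_eq_mul_inv,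
    ENNReal.le_div_iff_mul_le (by simp [hc]) (by simp), mul_comm]
  exact hle

theorem lintegral_comp_le_of_le_abs_det {M : ℝ} {L : ℝ≥0} (hf : ∀ x, HasFDerivAt f (f' x) x)
    (hc : 0 < c) (hdet : ∀ x, c ≤ |(f' x).det|) (hM : ∀ x, ‖f' x‖ ≤ M) (hL : LipschitzWith L f')
    (G : E → ℝ≥0∞) : ∫⁻ x, G (f x) ∂μ ≤ ENNReal.ofReal c⁻¹ * ∫⁻ y, G y ∂μ := by
  have : CompleteSpace E := FiniteDimensional.complete ℝ E
  have hne (x : E) : (f' x).det ≠ 0 := abs_pos.1 (hc.trans_le (hdet x))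
  obtain ⟨K, hK⟩ := exists_nnnorm_symm_le (E := E) hc M
  refine lintegral_comp_le_of_injective μ hf ?_ hc hdet G
  exact injective_of_norm_fderiv_symm_le
    (f' := fun x => (f' x).toContinuousLinearEquivOfDetNeZero (hne x)) hf
    (fun x => hK _ (hdet x) (hM x)) hL

end Haar

/-- Smooth functions all of whose derivatives of order at least two are bounded. -/
structure HasBoundedHigherDerivs {E : Type*} [NormedAddCommGroup E] [NormedSpace ℝ E]
    (Φ : E → ℝ) : Prop where
  contDiff : ContDiff ℝ (⊤ : ℕ∞) Φ
  exists_bound : ∀ k, 2 ≤ k → ∃ C : ℝ, ∀ U, ‖iteratedFDeriv ℝ k Φ U‖ ≤ C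

namespace HasBoundedHigherDerivs

variable {E : Type*} [NormedAddCommGroup E] [NormedSpace ℝ E] {Φ : E → ℝ}

theorem contDiff_fderiv (hΦ : HasBoundedHigherDerivs Φ) :
    ContDiff ℝ (⊤ : ℕ∞) (fderiv ℝ Φ) :=
  hΦ.contDiff.fderiv_right (by exact_mod_cast le_top)

theorem contDiff_fderiv_fderiv (hΦ : HasBoundedHigherDerivs Φ) :
    ContDiff ℝ (⊤ : ℕ∞) (fderiv ℝ (fderiv ℝ Φ)) :=
  hΦ.contDiff_fderiv.fderiv_right (by exact_mod_cast le_top)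

theorem exists_norm_fderiv_fderiv_le (hΦ : HasBoundedHigherDerivs Φ) :
    ∃ C : ℝ, ∀ U, ‖fderiv ℝ (fderiv ℝ Φ) U‖ ≤ C := by
  obtain ⟨C, hC⟩ := hΦ.exists_bound 2 le_rfl
  refine ⟨C, fun U => ?_⟩
  rw [← norm_iteratedFDeriv_one, norm_iteratedFDeriv_fderiv]
  exact hC U

theorem exists_lipschitzWith_fderiv_fderiv (hΦ : HasBoundedHigherDerivs Φ) :
    ∃ L : ℝ≥0, LipschitzWith L (fderiv ℝ (fderiv ℝ Φ)) := by
  obtain ⟨C, hC⟩ := hΦ.exists_bound 3 (by norm_num)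
  refine ⟨C.toNNReal, lipschitzWith_of_nnnorm_fderiv_le
    (hΦ.contDiff_fderiv_fderiv.differentiable (by simp)) fun U => ?_⟩
  refine NNReal.le_toNNReal_of_coe_le ?_
  rw [coe_nnnorm, ← norm_iteratedFDeriv_one, norm_iteratedFDeriv_fderiv,
    norm_iteratedFDeriv_fderiv]
  exact hC U

end HasBoundedHigherDerivs

variable {n N : ℕ}

theorem norm_comp_single_le (A : (Fin N → En n) →L[ℝ] ℝ) (j : Fin N) :
    ‖A ∘L .single ℝ (fun _ => En n) j‖ ≤ ‖A‖ := by
  refine ContinuousLinearMap.opNorm_le_bound _ (norm_nonneg A) fun v => ?_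
  have h := A.le_opNorm (Pi.single j v : Fin N → En n)
  rwa [Pi.norm_single] at h

/-- The Riesz representative of the restriction of a linear form on `(ℝⁿ)ᴺ` to slot `j`. -/
def slotRiesz (j : Fin N) : ((Fin N → En n) →L[ℝ] ℝ) →L[ℝ] En n :=
  LinearMap.mkContinuous
    { toFun A := (InnerProductSpace.toDual ℝ (En n)).symm (A ∘L .single ℝ (fun _ => En n) j)
      map_add' A B := by rw [ContinuousLinearMap.add_comp, map_add]
      map_smul' r A := by rw [ContinuousLinearMap.smul_comp, map_smulₛₗ]; rfl } 1 fun A => by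
    rw [one_mul]
    exact ((InnerProductSpace.toDual ℝ (En n)).symm.norm_map _).trans_le (norm_comp_single_le A j)

theorem norm_slotRiesz_le (j : Fin N) : ‖(slotRiesz j : _ →L[ℝ] En n)‖ ≤ 1 :=
  LinearMap.mkContinuous_norm_le _ zero_le_one _

theorem inner_slotRiesz (j : Fin N) (A : (Fin N → En n) →L[ℝ] ℝ) (v : En n) :
    ⟪slotRiesz j A, v⟫ = A (Pi.single j v) :=
  InnerProductSpace.toDual_symm_apply

/-- The gradient of a function on `(ℝⁿ)ᴺ` in its `j`-th variable. -/
def partialGradient (Φ : (Fin N → En n) → ℝ) (j : Fin N) (U : Fin N → En n) : En n :=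
  slotRiesz j (fderiv ℝ Φ U)

theorem fderiv_eq_sum_inner_partialGradient (Φ : (Fin N → En n) → ℝ) (U t : Fin N → En n) :
    fderiv ℝ Φ U t = ∑ j, ⟪partialGradient Φ j U, t j⟫ := by
  conv_lhs => rw [← Finset.univ_sum_single t, map_sum]
  simp only [partialGradient, inner_slotRiesz]

/-- The second derivative of a function on `(ℝⁿ)ᴺ` in its `i`-th and `j`-th variables, as the
derivative of the `j`-th partial gradient in the `i`-th variable. -/
def partialHessian (Φ : (Fin N → En n) → ℝ) (i j : Fin N) (U : Fin N → En n) :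
    En n →L[ℝ] En n :=
  slotRiesz j ∘L fderiv ℝ (fderiv ℝ Φ) U ∘L .single ℝ (fun _ => En n) i

theorem hasFDerivAt_partialGradient_update {Φ : (Fin N → En n) → ℝ}
    (hΦ : Differentiable ℝ (fderiv ℝ Φ)) (i j : Fin N) (U : Fin N → En n) (z : En n) :
    HasFDerivAt (fun z => partialGradient Φ j (Function.update U i z))
      (partialHessian Φ i j (Function.update U i z)) z := by
  have hupdate : HasFDerivAt (Function.update U i) (.single ℝ (fun _ => En n) i) z := by
    rw [funext (update_eq_update_zero_add_single U i)]
    exact (ContinuousLinearMap.single ℝ (fun _ => En n) i).hasFDerivAt.const_add _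
  exact (slotRiesz j).hasFDerivAt.comp z ((hΦ _).hasFDerivAt.comp z hupdate)

theorem norm_slotRiesz_comp_single_le (i j : Fin N)
    (B : (Fin N → En n) →L[ℝ] (Fin N → En n) →L[ℝ] ℝ) :
    ‖slotRiesz j ∘L B ∘L .single ℝ (fun _ => En n) i‖ ≤ ‖B‖ := by
  refine ContinuousLinearMap.opNorm_le_bound _ (norm_nonneg B) fun v => ?_
  calc ‖slotRiesz j (B (Pi.single i v))‖
      ≤ 1 * ‖B (Pi.single i v)‖ :=
        (slotRiesz j).le_of_opNorm_le (norm_slotRiesz_le j) _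
    _ ≤ ‖B‖ * ‖v‖ := by simpa only [one_mul, Pi.norm_single] using B.le_opNorm (Pi.single i v)

theorem lintegral_comp_partialGradient_le {Φ : (Fin N → En n) → ℝ}
    (hΦ : HasBoundedHigherDerivs Φ) {c : ℝ} (hc : 0 < c) (i j : Fin N)
    (hdet : ∀ U, c ≤ |(partialHessian Φ i j U).det|) (U : Fin N → En n) (G : En n → ℝ≥0∞) :
    ∫⁻ z, G (partialGradient Φ j (Function.update U i z)) ≤
      ENNReal.ofReal c⁻¹ * ∫⁻ q, G q := by
  obtain ⟨M, hM⟩ := hΦ.exists_norm_fderiv_fderiv_le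
  obtain ⟨L, hL⟩ := hΦ.exists_lipschitzWith_fderiv_fderiv
  refine lintegral_comp_le_of_le_abs_det volume (L := L)
    (hasFDerivAt_partialGradient_update (hΦ.contDiff_fderiv.differentiable (by simp)) i j U) hc
    (fun z => hdet _) (fun z => (norm_slotRiesz_comp_single_le i j _).trans (hM _)) ?_ G
  refine LipschitzWith.of_dist_le_mul fun z z' => ?_
  calc dist (partialHessian Φ i j (Function.update U i z))
        (partialHessian Φ i j (Function.update U i z'))
      ≤ dist (fderiv ℝ (fderiv ℝ Φ) (Function.update U i z))
          (fderiv ℝ (fderiv ℝ Φ) (Function.update U i z')) := by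
        rw [dist_eq_norm, dist_eq_norm (fderiv ℝ (fderiv ℝ Φ) _), partialHessian, partialHessian,
          ← ContinuousLinearMap.comp_sub, ← ContinuousLinearMap.sub_comp]
        exact norm_slotRiesz_comp_single_le i j (_ - _)
    _ ≤ L * dist (Function.update U i z) (Function.update U i z') := hL.dist_le_mul _ _
    _ = L * dist z z' := by
        rw [update_eq_update_zero_add_single U i z, update_eq_update_zero_add_single U i z',
          dist_add_left, dist_eq_norm, ← Pi.single_sub, Pi.norm_single, dist_eq_norm]

theorem toMatrix_partialHessian (Φ : (Fin N → En n) → ℝ) (i j : Fin N) (U : Fin N → En n)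
    (a b : Fin n) :
    LinearMap.toMatrix (EuclideanSpace.basisFun (Fin n) ℝ).toBasis
        (EuclideanSpace.basisFun (Fin n) ℝ).toBasis
        (partialHessian Φ i j U : En n →ₗ[ℝ] En n) a b =
      fderiv ℝ (fderiv ℝ Φ) U (coordVec (i, b)) (coordVec (j, a)) := by
  rw [LinearMap.toMatrix_apply]
  have h := inner_slotRiesz j (fderiv ℝ (fderiv ℝ Φ) U (coordVec (i, b)))
    (EuclideanSpace.single a 1)
  rw [EuclideanSpace.inner_single_right] at h
  simpa [partialHessian, coordVec] using h

theorem det_partialHessian_comm {Φ : (Fin N → En n) → ℝ} (hΦ : ContDiff ℝ (⊤ : ℕ∞) Φ)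
    (i j : Fin N) (U : Fin N → En n) :
    (partialHessian Φ i j U).det = (partialHessian Φ j i U).det := by
  let β := (EuclideanSpace.basisFun (Fin n) ℝ).toBasis
  change LinearMap.det (partialHessian Φ i j U : En n →ₗ[ℝ] En n) =
    LinearMap.det (partialHessian Φ j i U : En n →ₗ[ℝ] En n)
  rw [← LinearMap.det_toMatrix β, ← LinearMap.det_toMatrix β, ← Matrix.det_transpose]
  congr 1
  ext a b
  rw [Matrix.transpose_apply, toMatrix_partialHessian, toMatrix_partialHessian]
  exact isSymmSndFDerivAt_of_contDiff hΦ U _ _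

theorem mixHess_apply_eq_fderiv_fderiv {φ : En n → En n → ℝ}
    (hφ : ContDiff ℝ (⊤ : ℕ∞) fun w : En n × En n => φ w.1 w.2) (U : Fin 2 → En n)
    (a b : Fin n) :
    mixHess φ (U 0) (U 1) a b =
      fderiv ℝ (fderiv ℝ (pairPhase φ)) U (coordVec (0, a)) (coordVec (1, b)) := by
  have hΦ := contDiff_pairPhase hφ
  have hinner (y : En n) : fderiv ℝ (φ y) (U 1) (EuclideanSpace.single b 1) =
      dirDeriv [coordVec (1, b)] (pairPhase φ) (Function.update U 0 y) := by
    have h := dirDeriv_update hΦ 1 [b] (Function.update U 0 y) (U 1)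
    have hslot : Function.update (Function.update U 0 y) 1 (U 1) = Function.update U 0 y :=
      Function.update_eq_self_iff.2 (by simp)
    rw [hslot, List.map_singleton, List.map_singleton] at h
    rw [← h]
    simp [pairPhase, dirDeriv_cons]
  have houter := dirDeriv_update (contDiff_dirDeriv hΦ [coordVec (1, b)]) 0 [a] U (U 0)
  rw [Function.update_eq_self, List.map_singleton, List.map_singleton] at houter
  rw [← fderiv_fderiv_apply hΦ]
  simp only [mixHess, Matrix.of_apply, pd, hinner]
  exact houter

theorem det_partialHessian_pairPhase {φ : En n → En n → ℝ}
    (hφ : ContDiff ℝ (⊤ : ℕ∞) fun w : En n × En n => φ w.1 w.2) {i j : Fin 2} (hij : i ≠ j)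
    (U : Fin 2 → En n) :
    (partialHessian (pairPhase φ) i j U).det = (mixHess φ (U 0) (U 1)).det := by
  have hbase : (partialHessian (pairPhase φ) 1 0 U).det = (mixHess φ (U 0) (U 1)).det := by
    change LinearMap.det (partialHessian (pairPhase φ) 1 0 U : En n →ₗ[ℝ] En n) = _
    rw [← LinearMap.det_toMatrix (EuclideanSpace.basisFun (Fin n) ℝ).toBasis]
    congr 1
    ext a b
    rw [toMatrix_partialHessian, mixHess_apply_eq_fderiv_fderiv hφ]
    exact isSymmSndFDerivAt_of_contDiff (contDiff_pairPhase hφ) U _ _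
  fin_cases i <;> fin_cases j
  · exact absurd rfl hij
  · exact (det_partialHessian_comm (contDiff_pairPhase hφ) 0 1 U).trans hbase
  · exact hbase
  · exact absurd rfl hij

end ChangeOfVariables

section LocalizedAmplitude

open Set Filter

section TaylorRemainder

variable {E : Type*} [NormedAddCommGroup E] [NormedSpace ℝ E] {Φ : E → ℝ}

/-- The remainder of the first-order Taylor expansion of `Φ` at `θ`, as a function of the
increment. -/
def taylorRemainder (Φ : E → ℝ) (θ t : E) : ℝ :=
  Φ (θ + t) - Φ θ - fderiv ℝ Φ θ t

theorem contDiff_taylorRemainder (hΦ : ContDiff ℝ (⊤ : ℕ∞) Φ) (θ : E) :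
    ContDiff ℝ (⊤ : ℕ∞) (taylorRemainder Φ θ) :=
  ((hΦ.comp (contDiff_const.add contDiff_id)).sub contDiff_const).sub (fderiv ℝ Φ θ).contDiff

theorem fderiv_taylorRemainder (hΦ : Differentiable ℝ Φ) (θ : E) :
    fderiv ℝ (taylorRemainder Φ θ) = fun t => fderiv ℝ Φ (θ + t) - fderiv ℝ Φ θ := by
  funext t
  have htranslate : HasFDerivAt (fun t => Φ (θ + t)) (fderiv ℝ Φ (θ + t)) t :=
    (hasFDerivAt_comp_add_left θ).2 (hΦ (θ + t)).hasFDerivAt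
  exact ((htranslate.sub_const (Φ θ)).sub (fderiv ℝ Φ θ).hasFDerivAt).fderiv

theorem norm_iteratedFDeriv_taylorRemainder (hΦ : Differentiable ℝ Φ) (k : ℕ) (θ t : E) :
    ‖iteratedFDeriv ℝ (k + 2) (taylorRemainder Φ θ) t‖ =
      ‖iteratedFDeriv ℝ (k + 2) Φ (θ + t)‖ := by
  have hsecond : fderiv ℝ (fderiv ℝ (taylorRemainder Φ θ)) =
      fun t => fderiv ℝ (fderiv ℝ Φ) (θ + t) := by
    funext t
    rw [fderiv_taylorRemainder hΦ, fderiv_sub_const, fderiv_comp_add_left]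
  rw [← norm_iteratedFDeriv_fderiv, ← norm_iteratedFDeriv_fderiv, hsecond,
    iteratedFDeriv_comp_add_left, norm_iteratedFDeriv_fderiv, norm_iteratedFDeriv_fderiv]

theorem HasBoundedHigherDerivs.exists_norm_iteratedFDeriv_taylorRemainder_le
    (hΦ : HasBoundedHigherDerivs Φ) (ρ : ℝ) {k : ℕ} (hk : k ≠ 0) :
    ∃ C : ℝ, ∀ θ, ∀ t ∈ Metric.closedBall (0 : E) ρ,
      ‖iteratedFDeriv ℝ k (taylorRemainder Φ θ) t‖ ≤ C := by
  have hdiff := hΦ.contDiff.differentiable (by simp)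
  match k, hk with
  | 1, _ =>
    obtain ⟨C, hC⟩ := hΦ.exists_norm_fderiv_fderiv_le
    refine ⟨C * ρ, fun θ t ht => ?_⟩
    have hlip := convex_univ.norm_image_sub_le_of_norm_fderiv_le
      (fun U _ => hΦ.contDiff_fderiv.differentiable (by simp) U) (fun U _ => hC U)
      (mem_univ θ) (mem_univ (θ + t))
    rw [norm_iteratedFDeriv_one, fderiv_taylorRemainder hdiff]
    rw [add_sub_cancel_left] at hlip
    exact hlip.trans (mul_le_mul_of_nonneg_left (mem_closedBall_zero_iff.1 ht)
      ((norm_nonneg (fderiv ℝ (fderiv ℝ Φ) θ)).trans (hC θ)))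
  | k + 2, _ =>
    obtain ⟨C, hC⟩ := hΦ.exists_bound (k + 2) (by omega)
    exact ⟨C, fun θ t _ => (norm_iteratedFDeriv_taylorRemainder hdiff k θ t).trans_le (hC _)⟩

end TaylorRemainder

section UniformBounds

variable {E : Type*} [NormedAddCommGroup E] [NormedSpace ℝ E] {ι : Type*} {S : Set E}

theorem contDiff_exp_I_mul {f : E → ℝ} (hf : ContDiff ℝ (⊤ : ℕ∞) f) :
    ContDiff ℝ (⊤ : ℕ∞) fun x => Complex.exp (I * f x) :=
  (contDiff_const.mul (ofRealCLM.contDiff.comp hf)).cexp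

theorem iteratedDeriv_exp_I_mul (k : ℕ) :
    iteratedDeriv k (fun s : ℝ => Complex.exp (I * s)) =
      fun s : ℝ => I ^ k * Complex.exp (I * s) := by
  induction k with
  | zero => simp
  | succ k ih =>
    funext s
    rw [iteratedDeriv_succ, ih]
    have h : HasDerivAt (fun s : ℝ => I * (s : ℂ)) (I * 1) s :=
      ofRealCLM.hasDerivAt.const_mul I
    rw [(h.cexp.const_mul (I ^ k)).deriv, pow_succ]
    ring

theorem norm_iteratedFDeriv_exp_I_mul (k : ℕ) (s : ℝ) :
    ‖iteratedFDeriv ℝ k (fun s : ℝ => Complex.exp (I * s)) s‖ = 1 := by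
  rw [norm_iteratedFDeriv_eq_norm_iteratedDeriv, iteratedDeriv_exp_I_mul, norm_mul, norm_pow,
    norm_I, one_pow, one_mul, norm_exp_I_mul_ofReal]

theorem exists_norm_iteratedFDeriv_exp_I_mul_le {R : ι → E → ℝ}
    (hR : ∀ θ, ContDiff ℝ (⊤ : ℕ∞) (R θ))
    (hbound : ∀ k ≠ 0, ∃ C : ℝ, ∀ θ, ∀ t ∈ S, ‖iteratedFDeriv ℝ k (R θ) t‖ ≤ C) (k : ℕ) :
    ∃ C : ℝ, ∀ θ, ∀ t ∈ S,
      ‖iteratedFDeriv ℝ k (fun t => Complex.exp (I * R θ t)) t‖ ≤ C := by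
  choose! C hC using hbound
  set D : ℝ := 1 + ∑ i ∈ Finset.range (k + 1), |C i|
  have hD : 1 ≤ D := le_add_of_nonneg_right (Finset.sum_nonneg fun _ _ => abs_nonneg _)
  have hCD {i : ℕ} (hi : 1 ≤ i) (hik : i ≤ k) : C i ≤ D ^ i :=
    calc C i ≤ |C i| := le_abs_self _
      _ ≤ ∑ i ∈ Finset.range (k + 1), |C i| :=
        Finset.single_le_sum (f := fun i => |C i|) (fun _ _ => abs_nonneg _)
          (Finset.mem_range.2 (by omega))
      _ ≤ D := le_add_of_nonneg_left zero_le_one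
      _ ≤ D ^ i := le_self_pow₀ hD (by omega)
  refine ⟨k.factorial * 1 * D ^ k, fun θ t ht => ?_⟩
  exact norm_iteratedFDeriv_comp_le (contDiff_exp_I_mul contDiff_id) (hR θ)
    (by exact_mod_cast le_top) t (fun i _ => (norm_iteratedFDeriv_exp_I_mul i _).le)
    fun i hi hik => (hC i (by omega) θ t ht).trans (hCD hi hik)

theorem exists_norm_iteratedFDeriv_mul_le {χ : E → ℂ} (hχ : ContDiff ℝ (⊤ : ℕ∞) χ)
    (hcompact : HasCompactSupport χ) (hsupp : tsupport χ ⊆ S) {G : ι → E → ℂ}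
    (hG : ∀ θ, ContDiff ℝ (⊤ : ℕ∞) (G θ))
    (hbound : ∀ k, ∃ C : ℝ, ∀ θ, ∀ t ∈ S, ‖iteratedFDeriv ℝ k (G θ) t‖ ≤ C) (k : ℕ) :
    ∃ C : ℝ, ∀ θ t, ‖iteratedFDeriv ℝ k (fun t => χ t * G θ t) t‖ ≤ C := by
  choose C hC using hbound
  have hχbound (i : ℕ) : ∃ A : ℝ, ∀ t, ‖iteratedFDeriv ℝ i χ t‖ ≤ A :=
    (hcompact.iteratedFDeriv i).exists_bound_of_continuous
      (hχ.continuous_iteratedFDeriv (by exact_mod_cast le_top))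
  choose A hA using hχbound
  refine ⟨∑ i ∈ Finset.range (k + 1), k.choose i * A i * |C (k - i)|, fun θ t => ?_⟩
  have hA0 (i : ℕ) : 0 ≤ A i := (norm_nonneg _).trans (hA i t)
  refine (norm_iteratedFDeriv_mul_le hχ (hG θ) t (by exact_mod_cast le_top)).trans
    (Finset.sum_le_sum fun i _ => ?_)
  by_cases ht : t ∈ S
  · have hGt := (hC (k - i) θ t ht).trans (le_abs_self _)
    gcongr
    · exact mul_nonneg (Nat.cast_nonneg _) (hA0 i)
    · exact hA i t
  · have hzero : iteratedFDeriv ℝ i χ t = 0 := by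
      by_contra h
      exact ht (hsupp (support_iteratedFDeriv_subset i h))
    rw [hzero, norm_zero, mul_zero, zero_mul]
    exact mul_nonneg (mul_nonneg (Nat.cast_nonneg _) (hA0 i)) (abs_nonneg _)

end UniformBounds

variable {n N : ℕ}

theorem norm_coordVec (c : Fin N × Fin n) : ‖coordVec c‖ = 1 := by
  rw [coordVec, Pi.norm_single, PiLp.norm_single, norm_one]

theorem norm_dirDeriv_coordVec_le {F : Type*} [NormedAddCommGroup F] [NormedSpace ℝ F]
    {f : (Fin N → En n) → F} (hf : ContDiff ℝ (⊤ : ℕ∞) f) (l : List (Fin N × Fin n))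
    (U : Fin N → En n) :
    ‖dirDeriv (l.map coordVec) f U‖ ≤ ‖iteratedFDeriv ℝ l.length f U‖ := by
  have h := iteratedFDeriv_apply_eq_dirDeriv hf l.length (fun i => coordVec (l.get i)) U
  rw [← Function.comp_def coordVec, ← List.map_ofFn, List.ofFn_get] at h
  rw [← h]
  refine ((iteratedFDeriv ℝ l.length f U).le_opNorm _).trans_eq ?_
  simp only [Function.comp_apply, norm_coordVec, Finset.prod_const_one, mul_one]

theorem hasSymbolDecay_of_tsupport_subset_closedBall {F : Type*} [NormedAddCommGroup F]
    [NormedSpace ℝ F] {b : (Fin N → En n) → F} (hb : ContDiff ℝ (⊤ : ℕ∞) b) {m ρ C : ℝ}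
    (hm : m ≤ 0) (hρ : 0 ≤ ρ) (hsupp : tsupport b ⊆ Metric.closedBall 0 ρ)
    (hC : ∀ k ≤ N * n, ∀ U, ‖iteratedFDeriv ℝ k b U‖ ≤ C) :
    HasSymbolDecay m (C * (1 + ρ) ^ ((N * n : ℕ) - m)) b := by
  intro l hl U
  have hC0 : 0 ≤ C := (norm_nonneg _).trans (hC 0 (Nat.zero_le _) 0)
  have hlN : (l.length : ℝ) ≤ (N * n : ℕ) := by exact_mod_cast hl
  refine (norm_dirDeriv_coordVec_le hb l U).trans ?_
  by_cases hU : U ∈ Metric.closedBall 0 ρ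
  · have hUρ : ‖U‖ ≤ ρ := mem_closedBall_zero_iff.1 hU
    have hweight : (1 + ρ) ^ (m - (N * n : ℕ)) ≤ (1 + ‖U‖) ^ (m - l.length) :=
      calc (1 + ρ) ^ (m - (N * n : ℕ)) ≤ (1 + ρ) ^ (m - l.length) :=
            rpow_le_rpow_of_exponent_le (by linarith) (by linarith)
        _ ≤ (1 + ‖U‖) ^ (m - l.length) :=
            rpow_le_rpow_of_nonpos (by positivity) (by linarith)
              (by linarith [Nat.cast_nonneg (α := ℝ) l.length])
    calc ‖iteratedFDeriv ℝ l.length b U‖ ≤ C := hC _ hl U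
      _ = C * (1 + ρ) ^ ((N * n : ℕ) - m) * (1 + ρ) ^ (m - (N * n : ℕ)) := by
          rw [mul_assoc, ← rpow_add (by linarith), sub_add_sub_cancel', sub_self, rpow_zero,
            mul_one]
      _ ≤ _ := by gcongr
  · have hzero : iteratedFDeriv ℝ l.length b U = 0 := by
      by_contra h
      exact hU (hsupp (support_iteratedFDeriv_subset _ h))
    rw [hzero, norm_zero]
    positivity

theorem exists_hasSymbolDecay_mul_exp_taylorRemainder {Φ : (Fin N → En n) → ℝ}
    (hΦ : HasBoundedHigherDerivs Φ) {χ : (Fin N → En n) → ℂ} (hχ : ContDiff ℝ (⊤ : ℕ∞) χ)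
    (hcompact : HasCompactSupport χ) {m : ℝ} (hm : m ≤ 0) :
    ∃ B : ℝ, ∀ θ,
      HasSymbolDecay m B fun t => χ t * Complex.exp (I * taylorRemainder Φ θ t) := by
  obtain ⟨ρ, hρ, hsupp⟩ := hcompact.isBounded.subset_closedBall_lt 0 0
  have hexp (θ : Fin N → En n) := contDiff_exp_I_mul (contDiff_taylorRemainder hΦ.contDiff θ)
  have hbound := exists_norm_iteratedFDeriv_mul_le hχ hcompact hsupp hexp
    (exists_norm_iteratedFDeriv_exp_I_mul_le (contDiff_taylorRemainder hΦ.contDiff)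
      fun _ => hΦ.exists_norm_iteratedFDeriv_taylorRemainder_le ρ)
  choose C hC using hbound
  refine ⟨_, fun θ => hasSymbolDecay_of_tsupport_subset_closedBall (hχ.mul (hexp θ)) hm hρ.le
    ((closure_mono fun t => left_ne_zero_of_mul).trans hsupp)
    (C := ∑ k ∈ Finset.range (N * n + 1), |C k|) fun k hk t => ?_⟩
  exact ((hC k θ t).trans (le_abs_self _)).trans (Finset.single_le_sum
    (f := fun k => |C k|) (fun _ _ => abs_nonneg _) (Finset.mem_range.2 (by omega)))

end LocalizedAmplitude

section WavePackets

open Set Filter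

theorem enorm_integral_le_lintegral_enorm_integral_mul_translate {E : Type*} [AddGroup E]
    [MeasurableSpace E] [MeasurableAdd₂ E] {μ : Measure E} [SFinite μ] [μ.IsAddRightInvariant]
    {W F : E → ℂ} (hW : Integrable W μ) (hW1 : ∫ t, W t ∂μ = 1) (hF : Integrable F μ) :
    ‖∫ U, F U ∂μ‖ₑ ≤ ∫⁻ θ, ‖∫ t, W t * F (θ + t) ∂μ‖ₑ ∂μ := by
  have hshift : Integrable (fun p : E × E => W p.1 * F (p.2 + p.1)) (μ.prod μ) :=
    (measurePreserving_prod_add_right μ μ).integrable_comp_of_integrable (hW.mul_prod hF)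
  have haverage : ∫ U, F U ∂μ = ∫ θ, ∫ t, W t * F (θ + t) ∂μ ∂μ :=
    calc ∫ U, F U ∂μ = ∫ t, ∫ θ, W t * F (θ + t) ∂μ ∂μ := by
          simp only [integral_const_mul, integral_add_right_eq_self, integral_mul_const, hW1,
            one_mul]
      _ = _ := integral_integral_swap hshift
  rw [haverage]
  exact enorm_integral_le_lintegral_enorm _

theorem lintegral_fin_two_eq_lintegral_update {α : Type*} [MeasureSpace α]
    [SigmaFinite (volume : Measure α)] {i j : Fin 2} (hij : i ≠ j) {f : (Fin 2 → α) → ℝ≥0∞}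
    (hf : Measurable f) :
    ∫⁻ θ, f θ = ∫⁻ η, ∫⁻ z, f (Function.update (fun _ => η) i z) := by
  have hpair := (volume_preserving_piFinTwo fun _ : Fin 2 => α).symm
  have hmeas := hf.comp hpair.measurable
  rw [← hpair.lintegral_comp_emb (MeasurableEquiv.measurableEmbedding _)]
  have hzero (η z : α) : Function.update (fun _ : Fin 2 => η) 0 z =
      (MeasurableEquiv.piFinTwo fun _ => α).symm (z, η) := by
    ext k; fin_cases k <;> rfl
  have hone (η z : α) : Function.update (fun _ : Fin 2 => η) 1 z =
      (MeasurableEquiv.piFinTwo fun _ => α).symm (η, z) := by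
    ext k; fin_cases k <;> rfl
  obtain rfl | rfl : i = 0 ∨ i = 1 := by omega
  · simp only [hzero]
    exact lintegral_prod_symm _ hmeas.aemeasurable
  · simp only [hone]
    exact lintegral_prod _ hmeas.aemeasurable

variable {N n : ℕ}

/-- The piece of `g` seen through the window `η + K`, recentred at the origin and modulated by
the frequency `q`. -/
def wavePacket (K : Set (En n)) (g : En n → ℂ) (η q s : En n) : ℂ :=
  Complex.exp (I * ⟪q, s⟫) * K.indicator (fun s => g (η + s)) s

theorem integrable_wavePacket {K : Set (En n)} (hK : MeasurableSet K) {g : En n → ℂ}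
    (hg : Integrable g) (η q : En n) : Integrable (wavePacket K g η q) :=
  ((hg.comp_add_left η).indicator hK).bdd_mul (c := 1)
    (Continuous.aestronglyMeasurable (by fun_prop))
    (ae_of_all _ fun _ => (norm_exp_I_mul_ofReal _).le)

theorem stronglyMeasurable_uncurry_wavePacket {α : Type*} [MeasurableSpace α] {K : Set (En n)}
    (hK : MeasurableSet K) {g : En n → ℂ} (hg : Measurable g) {η q : α → En n}
    (hη : Measurable η) (hq : Measurable q) :
    StronglyMeasurable (Function.uncurry fun a => wavePacket K g (η a) (q a)) := by
  have hwindow : Measurable ((Prod.snd ⁻¹' K).indicator fun p : α × En n => g (η p.1 + p.2)) :=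
    (hg.comp ((hη.comp measurable_fst).add measurable_snd)).indicator (measurable_snd hK)
  have hphase : Measurable fun p : α × En n => ⟪q p.1, p.2⟫ :=
    (hq.comp measurable_fst).inner measurable_snd
  exact Measurable.stronglyMeasurable
    ((Complex.measurable_exp.comp (hphase.complex_ofReal.const_mul I)).mul hwindow)

theorem stronglyMeasurable_wavePacket {K : Set (En n)} (hK : MeasurableSet K) {g : En n → ℂ}
    (hg : Measurable g) (η q : En n) : StronglyMeasurable (wavePacket K g η q) :=
  Measurable.stronglyMeasurable
    ((Continuous.measurable (by fun_prop)).mul ((hg.comp (measurable_const_add η)).indicator hK))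

theorem setIntegral_wavePacket {S K : Set (En n)} (hS : MeasurableSet S) (g : En n → ℂ)
    (η q : En n) :
    ∫ s in S, wavePacket K g η q s =
      ft (S.indicator (K.indicator fun s => g (η + s))) (-q) := by
  rw [← integral_indicator hS, ft]
  refine integral_congr_ae (ae_of_all _ fun s => ?_)
  by_cases hs : s ∈ S
  · simp only [indicator_of_mem hs, wavePacket, inner_neg_right, Complex.ofReal_neg, mul_neg,
      neg_neg, real_inner_comm]
  · simp only [indicator_of_notMem hs, mul_zero]

theorem lintegral_enorm_setIntegral_wavePacket_sq_le {S K : Set (En n)} (hS : MeasurableSet S)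
    (hK : MeasurableSet K) {g : En n → ℂ} (hg : Integrable g) (η : En n) :
    ∫⁻ q, ‖∫ s in S, wavePacket K g η q s‖ₑ ^ 2 ≤
      ENNReal.ofReal ((2 * Real.pi) ^ n) * ∫⁻ s in K, ‖g (η + s)‖ₑ ^ 2 := by
  simp only [setIntegral_wavePacket hS]
  rw [lintegral_neg_eq_self (μ := (volume : Measure (En n)))
      fun q => ‖ft (S.indicator (K.indicator fun s => g (η + s))) q‖ₑ ^ 2,
    ← lintegral_indicator hK]
  refine (lintegral_enorm_ft_sq_le (((hg.comp_add_left η).indicator hK).indicator hS)).trans ?_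
  gcongr with s
  by_cases hs : s ∈ K
  · simp only [indicator_of_mem hs]
    gcongr
    exact (enorm_indicator_le_enorm_self _ _).trans_eq (by rw [indicator_of_mem hs])
  · simp only [indicator, hs, if_false, ite_self, enorm_zero]
    simp

theorem lintegral_setLIntegral_add {G : Type*} [AddGroup G] [MeasurableSpace G]
    [MeasurableAdd₂ G] {μ : Measure G} [SFinite μ] [μ.IsAddRightInvariant] {h : G → ℝ≥0∞}
    (hh : Measurable h) (K : Set G) :
    ∫⁻ η, ∫⁻ s in K, h (η + s) ∂μ ∂μ = μ K * ∫⁻ s, h s ∂μ := by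
  rw [lintegral_lintegral_swap (f := fun η s => h (η + s)) (hh.comp measurable_add).aemeasurable]
  simp only [lintegral_add_right_eq_self h, setLIntegral_const, mul_comm]

theorem measurable_partialGradient {Φ : (Fin N → En n) → ℝ} (hΦ : ContDiff ℝ (⊤ : ℕ∞) Φ)
    (j : Fin N) : Measurable (partialGradient Φ j) :=
  ((slotRiesz j).continuous.comp (hΦ.continuous_fderiv (by simp))).measurable

theorem lintegral_sq_orthantAverage_wavePacket_le {Φ : (Fin 2 → En n) → ℝ}
    (hΦ : HasBoundedHigherDerivs Φ) {c : ℝ} (hc : 0 < c) {i j : Fin 2} (hij : i ≠ j)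
    (hdet : ∀ U, c ≤ |(partialHessian Φ i j U).det|) {K : Set (En n)} (hK : MeasurableSet K)
    {g : En n → ℂ} (hgm : Measurable g) (hg : Integrable g) (r : ℝ) :
    ∫⁻ θ : Fin 2 → En n, orthantAverage r (wavePacket K g (θ j) (partialGradient Φ j θ)) ^ 2 ≤
      (∫⁻ u : En n, ENNReal.ofReal (decayWeight r u)) ^ 2 *
        (ENNReal.ofReal c⁻¹ * (ENNReal.ofReal ((2 * Real.pi) ^ n) *
          (volume K * ∫⁻ s, ‖g s‖ₑ ^ 2))) := by
  have hpacket := stronglyMeasurable_uncurry_wavePacket hK hgm (measurable_pi_apply j)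
    (measurable_partialGradient hΦ.contDiff j)
  refine lintegral_sq_orthantAverage_le hpacket (fun u => ?_) r
  have hslice : Measurable fun θ : Fin 2 → En n =>
      ‖∫ s in orthant u, wavePacket K g (θ j) (partialGradient Φ j θ) s‖ₑ :=
    (measurable_enorm_setIntegral_orthant hpacket).comp (measurable_prodMk_right (y := u))
  rw [lintegral_fin_two_eq_lintegral_update hij (hslice.pow_const 2)]
  simp only [Function.update_of_ne hij.symm]
  calc ∫⁻ η, ∫⁻ z, ‖∫ s in orthant u, wavePacket K g η
          (partialGradient Φ j (Function.update (fun _ => η) i z)) s‖ₑ ^ 2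
      ≤ ∫⁻ η, ENNReal.ofReal c⁻¹ * (ENNReal.ofReal ((2 * Real.pi) ^ n) *
          ∫⁻ s in K, ‖g (η + s)‖ₑ ^ 2) := by
        refine lintegral_mono fun η => (lintegral_comp_partialGradient_le hΦ hc i j hdet _
          fun q => ‖∫ s in orthant u, wavePacket K g η q s‖ₑ ^ 2).trans ?_
        gcongr
        exact lintegral_enorm_setIntegral_wavePacket_sq_le (measurableSet_orthant_apply u) hK hg η
    _ = _ := by
        rw [lintegral_const_mul' _ _ ENNReal.ofReal_ne_top,
          lintegral_const_mul' _ _ ENNReal.ofReal_ne_top,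
          lintegral_setLIntegral_add (hgm.enorm.pow_const 2)]

/-- The product over the slots of `(ℝⁿ)ᴺ` of the normalization of the bump function `β`. -/
def bumpProduct (N : ℕ) (β : ContDiffBump (0 : En n)) (t : Fin N → En n) : ℂ :=
  ∏ j, (β.normed volume (t j) : ℂ)

theorem contDiff_bumpProduct (β : ContDiffBump (0 : En n)) :
    ContDiff ℝ (⊤ : ℕ∞) (bumpProduct N β) :=
  contDiff_prod fun j _ =>
    Complex.ofRealCLM.contDiff.comp (β.contDiff_normed.comp (contDiff_apply ℝ (En n) j))

theorem integral_bumpProduct (β : ContDiffBump (0 : En n)) : ∫ t, bumpProduct N β t = 1 := by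
  simp only [bumpProduct, integral_fintype_prod_volume_eq_prod fun (_ : Fin N) (s : En n) =>
    (β.normed volume s : ℂ), integral_complex_ofReal, β.integral_normed, Complex.ofReal_one,
    Finset.prod_const_one]

theorem integrable_bumpProduct (β : ContDiffBump (0 : En n)) : Integrable (bumpProduct N β) :=
  Integrable.fintype_prod (μ := fun _ => volume) fun _ => β.integrable_normed.ofReal

theorem bumpProduct_eq_zero (β : ContDiffBump (0 : En n)) {t : Fin N → En n} {j : Fin N}
    (hj : t j ∉ Metric.closedBall 0 β.rOut) : bumpProduct N β t = 0 := by
  refine Finset.prod_eq_zero (Finset.mem_univ j) ?_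
  rw [← β.tsupport_normed_eq (μ := volume)] at hj
  rw [image_eq_zero_of_notMem_tsupport hj, Complex.ofReal_zero]

theorem hasCompactSupport_bumpProduct (β : ContDiffBump (0 : En n)) :
    HasCompactSupport (bumpProduct N β) := by
  refine HasCompactSupport.intro (isCompact_univ_pi fun _ : Fin N =>
    isCompact_closedBall (0 : En n) β.rOut) fun t ht => ?_
  rw [mem_univ_pi, not_forall] at ht
  obtain ⟨j, hj⟩ := ht
  exact bumpProduct_eq_zero β hj

theorem bumpProduct_mul_exp_mul_prod (Φ : (Fin N → En n) → ℝ) (β : ContDiffBump (0 : En n))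
    (g : Fin N → En n → ℂ) (θ t : Fin N → En n) :
    bumpProduct N β t * (Complex.exp (I * Φ (θ + t)) * ∏ j, g j ((θ + t) j)) =
      Complex.exp (I * Φ θ) * (bumpProduct N β t * Complex.exp (I * taylorRemainder Φ θ t) *
        ∏ j, wavePacket (Metric.closedBall 0 β.rOut) (g j) (θ j)
          (partialGradient Φ j θ) (t j)) := by
  by_cases ht : ∀ j, t j ∈ Metric.closedBall (0 : En n) β.rOut
  · have hphase : Φ (θ + t) = Φ θ + taylorRemainder Φ θ t + fderiv ℝ Φ θ t := by
      rw [taylorRemainder]; ring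
    have hpackets : ∏ j, wavePacket (Metric.closedBall 0 β.rOut) (g j) (θ j)
          (partialGradient Φ j θ) (t j) =
        Complex.exp (I * fderiv ℝ Φ θ t) * ∏ j, g j ((θ + t) j) := by
      simp only [wavePacket, indicator_of_mem (ht _), Finset.prod_mul_distrib, ← Complex.exp_sum,
        ← Finset.mul_sum, ← Complex.ofReal_sum, fderiv_eq_sum_inner_partialGradient, Pi.add_apply]
    rw [hpackets, hphase]
    simp only [Complex.ofReal_add, mul_add, Complex.exp_add]
    ring
  · rw [not_forall] at ht
    obtain ⟨j, hj⟩ := ht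
    simp only [bumpProduct_eq_zero β hj, zero_mul, mul_zero]

theorem exists_enorm_integral_bumpProduct_mul_le {Φ : (Fin N → En n) → ℝ}
    (hΦ : HasBoundedHigherDerivs Φ) (β : ContDiffBump (0 : En n)) :
    ∃ B : ℝ, ∀ (θ : Fin N → En n) (g : Fin N → En n → ℂ), (∀ j, Measurable (g j)) →
      (∀ j, Integrable (g j)) →
      ‖∫ t, bumpProduct N β t * (Complex.exp (I * Φ (θ + t)) * ∏ j, g j ((θ + t) j))‖ₑ ≤
        ENNReal.ofReal B * ∏ j, orthantAverage (-1 + (-1) / ((N * n : ℕ) + 1))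
          (wavePacket (Metric.closedBall 0 β.rOut) (g j) (θ j) (partialGradient Φ j θ)) := by
  obtain ⟨B, hB⟩ := exists_hasSymbolDecay_mul_exp_taylorRemainder hΦ (contDiff_bumpProduct β)
    (hasCompactSupport_bumpProduct β) (m := -1) (by norm_num)
  have hwindow := Metric.isClosed_closedBall (x := (0 : En n)) (ε := β.rOut) |>.measurableSet
  refine ⟨B, fun θ g hgm hg => ?_⟩
  rw [funext (bumpProduct_mul_exp_mul_prod Φ β g θ), integral_const_mul, enorm_mul,
    ← ofReal_norm (Complex.exp _), norm_exp_I_mul_ofReal, ENNReal.ofReal_one, one_mul]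
  exact (hB θ).enorm_integral_mul_prod_le (by norm_num)
    ((contDiff_bumpProduct β).mul (contDiff_exp_I_mul (contDiff_taylorRemainder hΦ.contDiff θ)))
    (fun j => integrable_wavePacket hwindow (hg j) _ _)
    fun j => stronglyMeasurable_wavePacket hwindow (hgm j) _ _

end WavePackets

section OscillatoryOperator

open Set Filter ComplexConjugate

theorem enorm_integral_conj_mul_self {α : Type*} [MeasurableSpace α] {μ : Measure α}
    {f : α → ℂ} (hf : Integrable (fun x => ‖f x‖ ^ 2) μ) :
    ‖∫ x, conj (f x) * f x ∂μ‖ₑ = ∫⁻ x, ‖f x‖ₑ ^ 2 ∂μ := by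
  simp only [RCLike.conj_mul, ← RCLike.ofReal_pow]
  rw [integral_ofReal, ← ofReal_norm, RCLike.norm_ofReal,
    abs_of_nonneg (integral_nonneg fun x => by positivity),
    ofReal_integral_eq_lintegral_ofReal hf (ae_of_all _ fun x => by positivity)]
  simp only [ENNReal.ofReal_pow (norm_nonneg _), ofReal_norm]

theorem setLIntegral_enorm_sq_le_of_enorm_integral_mul_sq_le {E : Type*} [TopologicalSpace E]
    [T2Space E] [MeasurableSpace E] [BorelSpace E] {μ : Measure E} [IsFiniteMeasureOnCompacts μ]
    {F : E → ℂ} (hF : Continuous F) {A : ℝ≥0∞}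
    (hA : ∀ h : E → ℂ, Measurable h → Integrable h μ →
      ‖∫ x, h x * F x ∂μ‖ₑ ^ 2 ≤ (∫⁻ x, ‖h x‖ₑ ^ 2 ∂μ) * A) {S : Set E} (hS : IsCompact S) :
    ∫⁻ x in S, ‖F x‖ₑ ^ 2 ∂μ ≤ A := by
  have hconj : Continuous fun x => conj (F x) := Complex.continuous_conj.comp hF
  have hpair : ‖∫ x, S.indicator (fun x => conj (F x)) x * F x ∂μ‖ₑ =
      ∫⁻ x in S, ‖F x‖ₑ ^ 2 ∂μ := by
    rw [← enorm_integral_conj_mul_self ((hF.norm.pow 2).continuousOn.integrableOn_compact hS),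
      ← integral_indicator hS.measurableSet]
    simp only [← indicator_mul_left]
  have hnorm : ∫⁻ x, ‖S.indicator (fun x => conj (F x)) x‖ₑ ^ 2 ∂μ =
      ∫⁻ x in S, ‖F x‖ₑ ^ 2 ∂μ := by
    rw [← lintegral_indicator hS.measurableSet]
    refine lintegral_congr fun x => ?_
    by_cases hx : x ∈ S
    · simp only [indicator_of_mem hx, ← ofReal_norm, RCLike.norm_conj]
    · simp [indicator_of_notMem hx]
  have hsq := hA _ (hconj.measurable.indicator hS.measurableSet)
    ((hconj.continuousOn.integrableOn_compact hS).integrable_indicator hS.measurableSet)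
  rw [hpair, hnorm, pow_two] at hsq
  rcases eq_or_ne (∫⁻ x in S, ‖F x‖ₑ ^ 2 ∂μ) 0 with hzero | hzero
  · exact hzero ▸ zero_le
  · exact (ENNReal.mul_le_mul_iff_right hzero (hpair ▸ enorm_ne_top)).1 hsq

theorem lintegral_enorm_sq_le_of_enorm_integral_mul_sq_le {E : Type*} [NormedAddCommGroup E]
    [ProperSpace E] [MeasurableSpace E] [BorelSpace E] {μ : Measure E}
    [IsFiniteMeasureOnCompacts μ] {F : E → ℂ} (hF : Continuous F) {A : ℝ≥0∞}
    (hA : ∀ h : E → ℂ, Measurable h → Integrable h μ →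
      ‖∫ x, h x * F x ∂μ‖ₑ ^ 2 ≤ (∫⁻ x, ‖h x‖ₑ ^ 2 ∂μ) * A) :
    ∫⁻ x, ‖F x‖ₑ ^ 2 ∂μ ≤ A := by
  have hcover : AECover μ atTop fun k : ℕ => Metric.closedBall (0 : E) k :=
    aecover_closedBall tendsto_natCast_atTop_atTop
  exact le_of_tendsto
    (hcover.lintegral_tendsto_of_countably_generated
      (hF.measurable.enorm.pow_const 2).aemeasurable)
    (Eventually.of_forall fun _ =>
      setLIntegral_enorm_sq_le_of_enorm_integral_mul_sq_le hF hA (isCompact_closedBall _ _))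

variable {n : ℕ}

theorem exists_enorm_integral_exp_mul_prod_le {N : ℕ} {Φ : (Fin N → En n) → ℝ}
    (hΦ : HasBoundedHigherDerivs Φ) (β : ContDiffBump (0 : En n)) :
    ∃ B : ℝ, ∀ g : Fin N → En n → ℂ, (∀ j, Measurable (g j)) → (∀ j, Integrable (g j)) →
      ‖∫ U, Complex.exp (I * Φ U) * ∏ j, g j (U j)‖ₑ ≤
        ENNReal.ofReal B * ∫⁻ θ, ∏ j, orthantAverage (-1 + (-1) / ((N * n : ℕ) + 1))
          (wavePacket (Metric.closedBall 0 β.rOut) (g j) (θ j) (partialGradient Φ j θ)) := by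
  obtain ⟨B, hB⟩ := exists_enorm_integral_bumpProduct_mul_le hΦ β
  refine ⟨B, fun g hgm hg => ?_⟩
  have hint : Integrable fun U : Fin N → En n => Complex.exp (I * Φ U) * ∏ j, g j (U j) :=
    (Integrable.fintype_prod (μ := fun _ => volume) hg).bdd_mul (c := 1)
      (contDiff_exp_I_mul hΦ.contDiff).continuous.aestronglyMeasurable
      (ae_of_all _ fun _ => (norm_exp_I_mul_ofReal _).le)
  refine (enorm_integral_le_lintegral_enorm_integral_mul_translate (integrable_bumpProduct β)
    (integral_bumpProduct β) hint).trans ?_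
  rw [← lintegral_const_mul' _ _ ENNReal.ofReal_ne_top]
  exact lintegral_mono fun θ => hB θ g hgm hg

theorem exists_enorm_integral_exp_mul_prod_sq_le {Φ : (Fin 2 → En n) → ℝ}
    (hΦ : HasBoundedHigherDerivs Φ) {c : ℝ} (hc : 0 < c)
    (hdet : ∀ i j, i ≠ j → ∀ U, c ≤ |(partialHessian Φ i j U).det|) :
    ∃ C : ℝ≥0∞, C ≠ ⊤ ∧ ∀ g : Fin 2 → En n → ℂ, (∀ j, Measurable (g j)) →
      (∀ j, Integrable (g j)) →
      ‖∫ U, Complex.exp (I * Φ U) * ∏ j, g j (U j)‖ₑ ^ 2 ≤ C * ∏ j, ∫⁻ s, ‖g j s‖ₑ ^ 2 := by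
  let β : ContDiffBump (0 : En n) := default
  let K := Metric.closedBall (0 : En n) β.rOut
  let r : ℝ := -1 + (-1) / ((2 * n : ℕ) + 1)
  have hK : MeasurableSet K := Metric.isClosed_closedBall.measurableSet
  obtain ⟨B, hB⟩ := exists_enorm_integral_exp_mul_prod_le hΦ β
  let D : ℝ≥0∞ := (∫⁻ u : En n, ENNReal.ofReal (decayWeight r u)) ^ 2 *
    (ENNReal.ofReal c⁻¹ * (ENNReal.ofReal ((2 * Real.pi) ^ n) * volume K))
  have hD : D ≠ ⊤ := by
    have hr : r < -1 := add_lt_of_neg_right _ (div_neg_of_neg_of_pos (by norm_num) (by positivity))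
    have := (lintegral_decayWeight_lt_top (n := n) hr).ne
    have := (isCompact_closedBall (0 : En n) β.rOut).measure_lt_top (μ := volume) |>.ne
    finiteness
  refine ⟨ENNReal.ofReal B ^ 2 * D ^ 2, by finiteness, fun g hgm hg => ?_⟩
  let S (j : Fin 2) (θ : Fin 2 → En n) : ℝ≥0∞ :=
    orthantAverage r (wavePacket K (g j) (θ j) (partialGradient Φ j θ))
  have hS (j : Fin 2) : AEMeasurable (S j) :=
    (measurable_orthantAverage (stronglyMeasurable_uncurry_wavePacket hK (hgm j)
      (measurable_pi_apply j) (measurable_partialGradient hΦ.contDiff j)) r).aemeasurable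
  have hSL2 (i j : Fin 2) (hij : i ≠ j) : ∫⁻ θ, S j θ ^ 2 ≤ D * ∫⁻ s, ‖g j s‖ₑ ^ 2 := by
    refine (lintegral_sq_orthantAverage_wavePacket_le hΦ hc hij (hdet i j hij) hK (hgm j)
      (hg j) r).trans_eq ?_
    simp only [D, mul_assoc]
  calc ‖∫ U, Complex.exp (I * Φ U) * ∏ j, g j (U j)‖ₑ ^ 2
      ≤ (ENNReal.ofReal B * ∫⁻ θ, S 0 θ * S 1 θ) ^ 2 := by
        gcongr
        simpa only [Fin.prod_univ_two] using hB g hgm hg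
    _ ≤ ENNReal.ofReal B ^ 2 * ((∫⁻ θ, S 0 θ ^ 2) * ∫⁻ θ, S 1 θ ^ 2) := by
        rw [mul_pow]
        gcongr
        exact sq_lintegral_mul_le (hS 0) (hS 1)
    _ ≤ ENNReal.ofReal B ^ 2 * ((D * ∫⁻ s, ‖g 0 s‖ₑ ^ 2) * (D * ∫⁻ s, ‖g 1 s‖ₑ ^ 2)) := by
        gcongr
        exacts [hSL2 1 0 one_ne_zero, hSL2 0 1 zero_ne_one]
    _ = _ := by rw [Fin.prod_univ_two]; ring

/-- The oscillatory integral operator `g ↦ ∫ e^{iφ(x,ξ)} g(ξ) dξ`. -/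
def oscillatoryIntegral (φ : En n → En n → ℝ) (g : En n → ℂ) (x : En n) : ℂ :=
  ∫ ξ, Complex.exp (I * φ x ξ) * g ξ

theorem continuous_oscillatoryIntegral {φ : En n → En n → ℝ}
    (hφ : Continuous fun w : En n × En n => φ w.1 w.2) {g : En n → ℂ} (hg : Integrable g) :
    Continuous (oscillatoryIntegral φ g) := by
  have hleft (x : En n) : Continuous (φ x) := hφ.comp (.prodMk_right x)
  have hright (ξ : En n) : Continuous fun x => φ x ξ := hφ.comp (.prodMk_left ξ)
  refine continuous_of_dominated (bound := fun ξ => ‖g ξ‖)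
    (fun x => (Continuous.aestronglyMeasurable (by fun_prop)).mul hg.1)
    (fun x => ae_of_all _ fun ξ => ?_) hg.norm (ae_of_all _ fun ξ => by fun_prop)
  rw [norm_mul, norm_exp_I_mul_ofReal, one_mul]

theorem integral_exp_pairPhase_mul_prod {φ : En n → En n → ℝ}
    (hφ : Continuous fun w : En n × En n => φ w.1 w.2) {h g : En n → ℂ} (hh : Integrable h)
    (hg : Integrable g) :
    ∫ U, Complex.exp (I * pairPhase φ U) * ∏ j, (![h, g] : Fin 2 → En n → ℂ) j (U j) =
      ∫ x, h x * oscillatoryIntegral φ g x := by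
  let G (p : En n × En n) : ℂ := Complex.exp (I * φ p.1 p.2) * (h p.1 * g p.2)
  have hint : Integrable G (volume.prod volume) :=
    (hh.mul_prod hg).bdd_mul (c := 1) (Continuous.aestronglyMeasurable (by fun_prop))
      (ae_of_all _ fun _ => (norm_exp_I_mul_ofReal _).le)
  calc ∫ U, Complex.exp (I * pairPhase φ U) * ∏ j, (![h, g] : Fin 2 → En n → ℂ) j (U j)
      = ∫ U, G (MeasurableEquiv.piFinTwo (fun _ => En n) U) := by
        simp only [Fin.prod_univ_two]
        rfl
    _ = ∫ p, G p := (volume_preserving_piFinTwo fun _ : Fin 2 => En n).integral_comp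
        (MeasurableEquiv.measurableEmbedding _) G
    _ = ∫ x, ∫ ξ, G (x, ξ) := integral_prod _ hint
    _ = _ := by
        simp only [G, oscillatoryIntegral, ← integral_const_mul, mul_left_comm]

theorem exists_lintegral_enorm_oscillatoryIntegral_sq_le {φ : En n → En n → ℝ}
    (hφ : ContDiff ℝ (⊤ : ℕ∞) fun w : En n × En n => φ w.1 w.2)
    (hbounded : HasBoundedHigherDerivs (pairPhase φ)) {c : ℝ} (hc : 0 < c)
    (hdet : ∀ x ξ, c ≤ |(mixHess φ x ξ).det|) :
    ∃ C : ℝ≥0∞, C ≠ ⊤ ∧ ∀ g : En n → ℂ, Measurable g → Integrable g →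
      ∫⁻ x, ‖oscillatoryIntegral φ g x‖ₑ ^ 2 ≤ C * ∫⁻ ξ, ‖g ξ‖ₑ ^ 2 := by
  obtain ⟨C, hC, hbilinear⟩ := exists_enorm_integral_exp_mul_prod_sq_le hbounded hc
    fun i j hij U => by rw [det_partialHessian_pairPhase hφ hij]; exact hdet _ _
  refine ⟨C, hC, fun g hgm hg => lintegral_enorm_sq_le_of_enorm_integral_mul_sq_le
    (continuous_oscillatoryIntegral hφ.continuous hg) fun h hhm hh => ?_⟩
  have hpair := hbilinear ![h, g] (Fin.forall_fin_two.2 ⟨hhm, hgm⟩) (Fin.forall_fin_two.2 ⟨hh, hg⟩)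
  rw [integral_exp_pairPhase_mul_prod hφ.continuous hh hg, Fin.prod_univ_two] at hpair
  exact hpair.trans_eq (mul_left_comm _ _ _)

theorem hasBoundedHigherDerivs_pairPhase {φ : En n → En n → ℝ}
    (hφ : ContDiff ℝ (⊤ : ℕ∞) fun w : En n × En n => φ w.1 w.2)
    (hbd : ∀ α β : Fin n → ℕ, 2 ≤ mdeg α + mdeg β →
      ∃ C : ℝ, ∀ x ξ : En n, |mixedD β α φ x ξ| ≤ C) :
    HasBoundedHigherDerivs (pairPhase φ) := by
  refine ⟨contDiff_pairPhase hφ, fun k hk => ?_⟩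
  have hword (w : Fin k → Fin 2 × Fin n) : ∃ C : ℝ, ∀ U, ‖dirDeriv ((coordWord fun j i =>
      (List.ofFn w).count (j, i)).map coordVec) (pairPhase φ) U‖ ≤ C := by
    have hlength := (coordWord_count_perm (List.ofFn w)).length_eq
    rw [length_coordWord, Fin.sum_univ_two, List.length_ofFn] at hlength
    obtain ⟨C, hC⟩ := hbd _ _ (hk.trans_eq hlength.symm)
    refine ⟨C, fun U => ?_⟩
    rw [← mixedD_eq_dirDeriv hφ, Real.norm_eq_abs]
    exact hC _ _
  choose C hC using hword
  exact ⟨∑ w, C w, fun U => (norm_iteratedFDeriv_le_sum_coordWord (contDiff_pairPhase hφ) k U).trans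
    (Finset.sum_le_sum fun w _ => hC w U)⟩

end OscillatoryOperator

section MultilinearOperators

open Set Filter

theorem ae_forall_norm_le_of_forall_ae {α X F : Type*} [MeasurableSpace α] {μ : Measure α}
    [TopologicalSpace X] [TopologicalSpace.SeparableSpace X] [NormedAddCommGroup F]
    {g : α → X → F} (hg : ∀ a, Continuous (g a)) {w : X → ℝ} (hw : Continuous w)
    (h : ∀ x, ∀ᵐ a ∂μ, ‖g a x‖ ≤ w x) : ∀ᵐ a ∂μ, ∀ x, ‖g a x‖ ≤ w x := by
  obtain ⟨s, hscount, hsdense⟩ := TopologicalSpace.exists_countable_dense X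
  filter_upwards [(ae_ball_iff hscount).2 fun x _ => h x] with a ha x
  have hclosed : IsClosed {x | ‖g a x‖ ≤ w x} := isClosed_le (hg a).norm hw
  exact closure_minimal ha hclosed (hsdense.closure_eq ▸ mem_univ x)

theorem eLpNorm_div_card_le_of_ae_enorm_le_prod {α E ι : Type*} [MeasurableSpace α]
    {μ : Measure α} [NormedAddCommGroup E] [Fintype ι] [Nonempty ι] {p : ℝ} (hp : 0 < p)
    {S : ι → α → ℝ≥0∞} (hS : ∀ i, AEMeasurable (S i) μ) {F : α → E} {B : ℝ≥0∞} (hB : B ≠ ⊤)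
    (hF : ∀ᵐ x ∂μ, ‖F x‖ₑ ≤ B * ∏ i, S i x) :
    eLpNorm F (ENNReal.ofReal (p / Fintype.card ι)) μ ≤
      B * ∏ i, (∫⁻ x, S i x ^ p ∂μ) ^ (1 / p) := by
  have hcard : (0 : ℝ) < Fintype.card ι := by exact_mod_cast Fintype.card_pos
  have hq : 0 < p / Fintype.card ι := by positivity
  set q : ℝ := p / Fintype.card ι with hqdef
  have hholder : ∫⁻ x, ∏ i, S i x ^ q ∂μ ≤
      ∏ i, (∫⁻ x, S i x ^ p ∂μ) ^ (1 / Fintype.card ι : ℝ) := by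
    have h := ENNReal.lintegral_prod_norm_pow_le (μ := μ) Finset.univ (f := fun i x => S i x ^ p)
      (p := fun _ => (1 / Fintype.card ι : ℝ)) (fun i _ => (hS i).pow_const p)
      (by simp [hcard.ne']) fun _ _ => by positivity
    simpa only [← ENNReal.rpow_mul, mul_one_div] using h
  rw [eLpNorm_eq_lintegral_rpow_enorm_toReal (ENNReal.ofReal_pos.2 hq).ne' ENNReal.ofReal_ne_top,
    ENNReal.toReal_ofReal hq.le]
  calc (∫⁻ x, ‖F x‖ₑ ^ q ∂μ) ^ (1 / q)
      ≤ (∫⁻ x, (B * ∏ i, S i x) ^ q ∂μ) ^ (1 / q) := by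
        gcongr ?_ ^ _
        exact lintegral_mono_ae (hF.mono fun x hx => by gcongr)
    _ = (B ^ q * ∫⁻ x, ∏ i, S i x ^ q ∂μ) ^ (1 / q) := by
        simp only [ENNReal.mul_rpow_of_nonneg _ _ hq.le, ← ENNReal.prod_rpow_of_nonneg hq.le]
        rw [lintegral_const_mul' _ _ (by finiteness)]
    _ ≤ (B ^ q * ∏ i, (∫⁻ x, S i x ^ p ∂μ) ^ (1 / Fintype.card ι : ℝ)) ^ (1 / q) := by gcongr
    _ = _ := by
        have hexponent : (1 / Fintype.card ι : ℝ) * (1 / q) = 1 / p := by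
          rw [hqdef]
          field_simp
        rw [ENNReal.mul_rpow_of_nonneg _ _ (by positivity),
          ← ENNReal.prod_rpow_of_nonneg (by positivity)]
        simp only [← ENNReal.rpow_mul, hexponent, mul_one_div_cancel hq.ne', ENNReal.rpow_one]

variable {n N : ℕ}

theorem one_add_sum_norm_rpow_le {s : ℝ} (hs : s ≤ 0) (U : Fin N → En n) :
    (1 + ∑ j, ‖U j‖) ^ s ≤ (1 + ‖U‖) ^ s := by
  refine Real.rpow_le_rpow_of_nonpos (by positivity) ?_ hs
  gcongr
  exact (pi_norm_le_iff_of_nonneg (by positivity)).2 fun j =>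
    Finset.single_le_sum (f := fun j => ‖U j‖) (fun _ _ => norm_nonneg _) (Finset.mem_univ j)

theorem exists_ae_norm_dirDeriv_le_of_lpSmN {m : ℝ} (hm : m ≤ 0) {a : En n → (Fin N → En n) → ℂ}
    (ha : LpSmN ⊤ m 1 a) (l : List (Fin N × Fin n)) :
    ∃ C : ℝ, ∀ᵐ x, ∀ U, ‖dirDeriv (l.map coordVec) (a x) U‖ ≤ C * (1 + ‖U‖) ^ (m - l.length) := by
  obtain ⟨hsmooth, -, hbound⟩ := ha
  obtain ⟨C, hC⟩ := hbound fun j i => l.count (j, i)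
  have hperm := coordWord_count_perm l
  have horder : m - 1 * ∑ j, (mdeg fun i => l.count (j, i) : ℝ) = m - l.length := by
    rw [one_mul, ← hperm.length_eq, length_coordWord, Nat.cast_sum]
  simp only [horder, eLpNorm_exponent_top, mderivN_eq_dirDeriv] at hC
  have hweight : Continuous fun U : Fin N → En n => |C| * (1 + ‖U‖) ^ (m - l.length) :=
    ((continuous_const.add continuous_norm).rpow_const fun U =>
      .inl (by positivity : 1 + ‖U‖ ≠ 0)).const_mul _
  refine ⟨|C|, ae_forall_norm_le_of_forall_ae
    (fun x => (contDiff_dirDeriv (hsmooth x) _).continuous) hweight fun U => ?_⟩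
  filter_upwards [enorm_ae_le_eLpNormEssSup
    (fun x => dirDeriv ((coordWord fun j i => l.count (j, i)).map coordVec) (a x) U) volume]
    with x hx
  rw [dirDeriv_perm (hsmooth x) (hperm.map coordVec), ← ofReal_norm] at hx
  have hle : C * (1 + ∑ j, ‖U j‖) ^ (m - l.length) ≤ |C| * (1 + ‖U‖) ^ (m - l.length) := by
    have hdecay : m - l.length ≤ 0 := by linarith [Nat.cast_nonneg (α := ℝ) l.length]
    exact mul_le_mul (le_abs_self C) (one_add_sum_norm_rpow_le hdecay U) (by positivity)
      (abs_nonneg C)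
  exact (ENNReal.ofReal_le_ofReal_iff (by positivity)).1
    ((hx.trans (hC U)).trans (ENNReal.ofReal_le_ofReal hle))

theorem exists_ae_hasSymbolDecay_of_lpSmN {m : ℝ} (hm : m ≤ 0) {a : En n → (Fin N → En n) → ℂ}
    (ha : LpSmN ⊤ m 1 a) : ∃ B : ℝ, ∀ᵐ x, HasSymbolDecay m B (a x) := by
  choose C hC using exists_ae_norm_dirDeriv_le_of_lpSmN hm ha
  obtain ⟨B, hB⟩ := ((List.finite_length_le (Fin N × Fin n) (N * n)).image C).bddAbove
  refine ⟨B, ?_⟩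
  filter_upwards [ae_all_iff.2 hC] with x hx l hl U
  refine (hx l U).trans ?_
  gcongr
  exact hB (mem_image_of_mem C hl)

theorem enorm_mfio_le_mul_prod_orthantAverage {m B : ℝ} (hm : m < 0)
    {a : En n → (Fin N → En n) → ℂ} {x : En n} (hax : ContDiff ℝ (⊤ : ℕ∞) (a x))
    (hB : HasSymbolDecay m B (a x)) {φ : Fin N → En n → En n → ℝ}
    (hφ : ∀ j, Continuous (φ j x)) {f : Fin N → En n → ℂ} (hf : ∀ j, Integrable (f j))
    (hfhat : ∀ j, Integrable (ft (f j))) :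
    ‖mfio a φ f x‖ₑ ≤ ENNReal.ofReal B * ∏ j, orthantAverage (-1 + m / ((N * n : ℕ) + 1))
      fun ξ => Complex.exp (I * φ j x ξ) * ft (f j) ξ := by
  have hcontinuous (j : Fin N) : Continuous fun ξ => Complex.exp (I * φ j x ξ) := by
    have := hφ j
    fun_prop
  have hfactor : mfio a φ f x =
      ∫ U, a x U * ∏ j, (Complex.exp (I * φ j x (U j)) * ft (f j) (U j)) := by
    simp only [mfio, Complex.ofReal_sum, Finset.mul_sum, Complex.exp_sum, mul_assoc,
      Finset.prod_mul_distrib]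
  have hint (j : Fin N) : Integrable fun ξ => Complex.exp (I * φ j x ξ) * ft (f j) ξ :=
    (hfhat j).bdd_mul (c := 1) (hcontinuous j).aestronglyMeasurable
      (ae_of_all _ fun _ => (norm_exp_I_mul_ofReal _).le)
  have hmeas (j : Fin N) :
      StronglyMeasurable fun ξ => Complex.exp (I * φ j x ξ) * ft (f j) ξ :=
    ((hcontinuous j).mul (continuous_ft (hf j))).stronglyMeasurable
  have hseparated := hB.enorm_integral_mul_prod_le hm hax hint hmeas
  rwa [← hfactor] at hseparated

theorem stronglyMeasurable_uncurry_exp_mul {φ : En n → En n → ℝ}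
    (hφ : Continuous fun w : En n × En n => φ w.1 w.2) {g : En n → ℂ} (hg : Measurable g) :
    StronglyMeasurable (Function.uncurry fun x ξ => Complex.exp (I * φ x ξ) * g ξ) :=
  Measurable.stronglyMeasurable
    ((Continuous.measurable (by fun_prop)).mul (hg.comp measurable_snd))

theorem lintegral_sq_orthantAverage_exp_mul_le {φ : En n → En n → ℝ}
    (hφ : Continuous fun w : En n × En n => φ w.1 w.2) {C : ℝ≥0∞}
    (hC : ∀ g : En n → ℂ, Measurable g → Integrable g →
      ∫⁻ x, ‖oscillatoryIntegral φ g x‖ₑ ^ 2 ≤ C * ∫⁻ ξ, ‖g ξ‖ₑ ^ 2)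
    {g : En n → ℂ} (hgm : Measurable g) (hg : Integrable g) (r : ℝ) :
    ∫⁻ x, orthantAverage r (fun ξ => Complex.exp (I * φ x ξ) * g ξ) ^ 2 ≤
      (∫⁻ u : En n, ENNReal.ofReal (decayWeight r u)) ^ 2 * (C * ∫⁻ ξ, ‖g ξ‖ₑ ^ 2) := by
  refine lintegral_sq_orthantAverage_le (stronglyMeasurable_uncurry_exp_mul hφ hgm) (fun u => ?_) r
  have hu := measurableSet_orthant_apply u
  calc ∫⁻ x, ‖∫ ξ in orthant u, Complex.exp (I * φ x ξ) * g ξ‖ₑ ^ 2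
      = ∫⁻ x, ‖oscillatoryIntegral φ ((orthant u).indicator g) x‖ₑ ^ 2 := by
        simp only [oscillatoryIntegral, ← integral_indicator hu, indicator_mul_right]
    _ ≤ C * ∫⁻ ξ, ‖(orthant u).indicator g ξ‖ₑ ^ 2 := hC _ (hgm.indicator hu) (hg.indicator hu)
    _ ≤ C * ∫⁻ ξ, ‖g ξ‖ₑ ^ 2 := by
        gcongr
        exact enorm_indicator_le_enorm_self _ _

theorem exists_sqrt_lintegral_sq_orthantAverage_le {φ : En n → En n → ℝ}
    (hφ : ContDiff ℝ (⊤ : ℕ∞) fun w : En n × En n => φ w.1 w.2)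
    (hdet : ∃ c : ℝ, 0 < c ∧ ∀ x ξ, c ≤ |(mixHess φ x ξ).det|)
    (hbd : ∀ α β : Fin n → ℕ, 2 ≤ mdeg α + mdeg β →
      ∃ C : ℝ, ∀ x ξ : En n, |mixedD β α φ x ξ| ≤ C) {r : ℝ} (hr : r < -1) :
    ∃ D : ℝ≥0∞, D ≠ ⊤ ∧ ∀ f : En n → ℂ, Integrable f → Integrable (ft f) →
      (∫⁻ x, orthantAverage r (fun ξ => Complex.exp (I * φ x ξ) * ft f ξ) ^ (2 : ℝ)) ^ (1 / 2 : ℝ) ≤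
        D * eLpNorm f 2 volume := by
  obtain ⟨c, hc, hc'⟩ := hdet
  obtain ⟨C, hC, hL2⟩ :=
    exists_lintegral_enorm_oscillatoryIntegral_sq_le hφ (hasBoundedHigherDerivs_pairPhase hφ hbd)
      hc hc'
  have hV := (lintegral_decayWeight_lt_top (n := n) hr).ne
  set V := ∫⁻ u : En n, ENNReal.ofReal (decayWeight r u)
  refine ⟨(V ^ 2 * (C * ENNReal.ofReal ((2 * Real.pi) ^ n))) ^ (1 / 2 : ℝ), by finiteness,
    fun f hf hfhat => ?_⟩
  have hsqrt : eLpNorm f 2 volume = (eLpNorm f 2 volume ^ 2) ^ (1 / 2 : ℝ) := by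
    rw [← ENNReal.rpow_two, ← ENNReal.rpow_mul]
    norm_num
  rw [hsqrt, ← ENNReal.mul_rpow_of_nonneg _ _ (by norm_num)]
  gcongr
  simp only [ENNReal.rpow_two]
  calc ∫⁻ x, orthantAverage r (fun ξ => Complex.exp (I * φ x ξ) * ft f ξ) ^ 2
      ≤ V ^ 2 * (C * ∫⁻ ξ, ‖ft f ξ‖ₑ ^ 2) := lintegral_sq_orthantAverage_exp_mul_le hφ.continuous
        hL2 (continuous_ft hf).measurable hfhat r
    _ ≤ V ^ 2 * (C * (ENNReal.ofReal ((2 * Real.pi) ^ n) * ∫⁻ t, ‖f t‖ₑ ^ 2)) := by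
        gcongr
        exact lintegral_enorm_ft_sq_le hf
    _ = _ := by rw [lintegral_enorm_sq_eq_eLpNorm_sq]; ring

theorem statement12_general (hN : N ≠ 0) {m : ℝ} (hm : m < 0)
    {a : En n → (Fin N → En n) → ℂ} (ha : LpSmN ⊤ m 1 a) {φ : Fin N → En n → En n → ℝ}
    (hφ : ∀ j, ContDiff ℝ (⊤ : ℕ∞) fun w : En n × En n => φ j w.1 w.2)
    (hsnd : ∀ j, ∃ c : ℝ, 0 < c ∧ ∀ x ξ : En n, c ≤ |(mixHess (φ j) x ξ).det|)
    (hbd : ∀ j (α β : Fin n → ℕ), 2 ≤ mdeg α + mdeg β →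
      ∃ C : ℝ, ∀ x ξ : En n, |mixedD β α (φ j) x ξ| ≤ C) :
    ∃ C : ℝ, 0 < C ∧ ∀ f : Fin N → En n → ℂ, (∀ j, Integrable (f j)) →
      (∀ j, Integrable (ft (f j))) →
      eLpNorm (mfio a φ f) ((2 : ℝ≥0∞) / (N : ℝ≥0∞)) volume ≤
        ENNReal.ofReal C * ∏ j, eLpNorm (f j) 2 volume := by
  have : Nonempty (Fin N) := Fin.pos_iff_nonempty.1 (Nat.pos_of_ne_zero hN)
  have hr : -1 + m / ((N * n : ℕ) + 1) < -1 :=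
    add_lt_of_neg_right _ (div_neg_of_neg_of_pos hm (by positivity))
  obtain ⟨B, hB⟩ := exists_ae_hasSymbolDecay_of_lpSmN hm.le ha
  choose D hD hslot using fun j =>
    exists_sqrt_lintegral_sq_orthantAverage_le (hφ j) (hsnd j) (hbd j) hr
  set K : ℝ≥0∞ := ENNReal.ofReal B * ∏ j, D j
  have hK : K ≠ ⊤ := ENNReal.mul_ne_top ENNReal.ofReal_ne_top (ENNReal.prod_ne_top fun j _ => hD j)
  refine ⟨K.toReal + 1, by positivity, fun f hf hfhat => ?_⟩
  have hexponent : (2 : ℝ≥0∞) / N = ENNReal.ofReal (2 / Fintype.card (Fin N)) := by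
    rw [Fintype.card_fin, ENNReal.ofReal_div_of_pos (by positivity), ENNReal.ofReal_natCast,
      ENNReal.ofReal_ofNat]
  calc eLpNorm (mfio a φ f) (2 / N) volume
      ≤ ENNReal.ofReal B * ∏ j, (∫⁻ x, orthantAverage (-1 + m / ((N * n : ℕ) + 1))
          (fun ξ => Complex.exp (I * φ j x ξ) * ft (f j) ξ) ^ (2 : ℝ)) ^ (1 / 2 : ℝ) := by
        rw [hexponent]
        refine eLpNorm_div_card_le_of_ae_enorm_le_prod two_pos (fun j => ?_)
          ENNReal.ofReal_ne_top ?_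
        · exact (measurable_orthantAverage (stronglyMeasurable_uncurry_exp_mul (hφ j).continuous
            (continuous_ft (hf j)).measurable) _).aemeasurable
        · filter_upwards [hB] with x hx
          exact enorm_mfio_le_mul_prod_orthantAverage hm (ha.1 x) hx
            (fun j => (hφ j).continuous.comp (.prodMk_right x)) hf hfhat
    _ ≤ ENNReal.ofReal B * ∏ j, (D j * eLpNorm (f j) 2 volume) := by
        gcongr with j
        exact hslot j (f j) (hf j) (hfhat j)
    _ = K * ∏ j, eLpNorm (f j) 2 volume := by rw [Finset.prod_mul_distrib, mul_assoc]
    _ ≤ ENNReal.ofReal (K.toReal + 1) * ∏ j, eLpNorm (f j) 2 volume := by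
        gcongr
        exact ENNReal.le_ofReal_iff_toReal_le hK (by positivity) |>.2 (by linarith)

end MultilinearOperators

/-- Theorem 5.12, second part: `L²×⋯×L² → L^{2/N}` boundedness of
multilinear FIOs with inhomogeneous phases. -/
theorem statement12 {n : ℕ} (N : ℕ) (hN : 2 ≤ N) (m : ℝ) (hm : m < 0)
    (a : En n → (Fin N → En n) → ℂ) (ha : LpSmN ⊤ m 1 a)
    (φ : Fin N → En n → En n → ℝ)
    (hφ : ∀ j, ContDiff ℝ (⊤ : ℕ∞) (fun w : En n × En n => φ j w.1 w.2))
    (hsnd : ∀ j, ∃ c : ℝ, 0 < c ∧ ∀ x ξ : En n, c ≤ |(mixHess (φ j) x ξ).det|)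
    (hbd : ∀ j (α β : Fin n → ℕ), 2 ≤ mdeg α + mdeg β →
      ∃ C : ℝ, ∀ x ξ : En n, |mixedD β α (φ j) x ξ| ≤ C) :
    ∃ C : ℝ, 0 < C ∧ ∀ f : Fin N → 𝓢(En n, ℂ),
      eLpNorm (mfio a φ (fun j => ⇑(f j))) ((2 : ℝ≥0∞) / (N : ℝ≥0∞)) volume ≤
        ENNReal.ofReal C * ∏ j, eLpNorm (⇑(f j)) 2 volume := by
  obtain ⟨C, hC, hbound⟩ := statement12_general (by omega) hm ha hφ hsnd hbd
  exact ⟨C, hC, fun f =>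
    hbound _ (fun j => (f j).integrable) fun j => integrable_ft_schwartzMap (f j)⟩
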